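/- arXiv:1607.05889 — 5 statements merged into one kernel-verified Lean document; each statement's English description precedes it below -/
import Mathlib

section
/- For every multiplicative character D of F_q with D ∉ {ε, A₄, A̅₄} and every j ∈ F_q*, h(D,j) = ( G(D)²·G(φ) / G(D²φ) ) · ₂F₁(D, DA₄; A₄ | j⁴). -/
/-!
Write `φ = A₄²`, the quadratic character, and choose `s` with `2 j s = j² + 1`.

The substitution `t = (1 + x) / (1 - x)` turns `h(D, j)` into a multiple of
`Σ_t D(t² - 1) (D̄²φ)(ts - 1)` (`hKatz_eq`).

The sum defining `₂F₁(D, DA₄; A₄ | j⁴)` becomes, with `y = z / j²`, a multiple of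
`Σ_z A₄(z) D̄(4s² - (z + 1/z + 2))`. Since `A₄(1/z) = φ(z) A₄(z)`, the symmetry `z ↦ 1/z` makes the
nonsquares `z` cancel. Putting `z = w²` gives `Σ_w φ(w) D̄(4s² - (w + 1/w)²)`, and the weight of `φ`
on the fibre of `w + 1/w` over `v` is `φ(v + 2) + φ(v - 2)` (`sum_joukowski`). What remains is a
multiple of `Σ_u D̄(u² - s²) φ(u - 1)` (`hyp_sum_eq`).

These two reduced sums are proportional (`euler_symm`). Expanding `D̄²φ` and `φ` in additive
characters by Gauss sums reduces this to a proportionality of the sums `Σ_t D(t² - 1) ψ(rst)` and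
`Σ_t D̄(t² - s²) ψ(rt)` (`bessel_symm`), an analogue of `K_ν = K_{-ν}` for Bessel functions. Both
sums are twisted Kloosterman sums (`bessel_kloosterman`), exchanged by `m ↦ r² / (4m)`. The
constants match by `G(D) G(D̄) = D(-1) q`; the exclusion of `A₄` and `A̅₄` ensures `D²φ ≠ ε`.
-/


open Finset

noncomputable section

variable {F : Type} [Field F] [Fintype F] [DecidableEq F]

/-- Katz's mixed character sum `P(j,k)`; the quadratic character `φ` is `A₄ ^ 2`. -/
def Pkatz (ψ : AddChar F ℂ) (A₄ : MulChar F ℂ) (a : F) (j k : F) : ℂ :=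
  (if j = k then 1 else 0) + (A₄ ^ 2) (-1) * (if j = -k then 1 else 0) +
    (gaussSum (A₄ ^ 2) ψ)⁻¹ *
      ∑ x ∈ univ.filter (fun x : F => x ≠ 0),
        (A₄ ^ 2) (a / x - x) * ψ (x * (j + k) ^ 2 + (a / x) * (j - k) ^ 2)

/-- Katz's sums `V(j)`. -/
def Vkatz (ψ : AddChar F ℂ) (A₄ : MulChar F ℂ) (a : F) (τ : ℂ) (j : F) : ℂ :=
  if j = 0 then gaussSum A₄ ψ / τ + τ / gaussSum A₄ ψ
  else τ⁻¹ * ∑ x ∈ univ.filter (fun x : F => x ≠ 0), A₄ x * ψ (x + a * j ^ 4 / x)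

/-- The finite field hypergeometric function `₂F₁(A,B;C|x)`. -/
def hyp2F1 (A B C : MulChar F ℂ) (x : F) : ℂ :=
  ((1 : MulChar F ℂ) x / (Fintype.card F : ℂ)) *
    ∑ y : F, B y * (B⁻¹ * C) (y - 1) * A⁻¹ (1 - x * y)

/-- The Jacobi sum `J(A,B)`. -/
def Jsum (A B : MulChar F ℂ) : ℂ := ∑ y : F, A y * B (1 - y)

/-- The sum `h(D,j)`; the quadratic character `φ` is `A₄ ^ 2`. -/
def hKatz (A₄ D : MulChar F ℂ) (j : F) : ℂ :=
  ∑ x ∈ univ.filter (fun x : F => x ≠ 0),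
    D x * (A₄ ^ 2) (1 - x) * ((D⁻¹ ^ 2) * A₄ ^ 2) (x * (j + 1) ^ 2 + (j - 1) ^ 2)

/-- The sum `H(λ₁)`; the quadratic character `φ` is `A₄ ^ 2`. -/
def Hkatz (A₄ lam : MulChar F ℂ) (a : F) : ℂ :=
  ∑ p ∈ (univ ×ˢ univ).filter
      (fun p : F × F => p.1 ≠ 0 ∧ p.2 ≠ 0 ∧
        p.2 * (p.1 + 1) ^ 2 + a * (p.1 - 1) ^ 2 / p.2 = 0),
    (lam ^ 2 * A₄ ^ 2) p.1 * (A₄ ^ 2) (p.2 - a / p.2)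

/-- The Mellin transform `S(χ)` of the sums `V(j)`. -/
def Smel (ψ : AddChar F ℂ) (A₄ : MulChar F ℂ) (a : F) (τ : ℂ) (χ : MulChar F ℂ) : ℂ :=
  ∑ j ∈ univ.filter (fun j : F => j ≠ 0), χ j * Vkatz ψ A₄ a τ j

/-- The Mellin transform `T(χ)` of the sums `P(j,0)`. -/
def Tmel (ψ : AddChar F ℂ) (A₄ : MulChar F ℂ) (a : F) (χ : MulChar F ℂ) : ℂ :=
  ∑ j ∈ univ.filter (fun j : F => j ≠ 0), χ j * Pkatz ψ A₄ a j 0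

/-- The double Mellin transform `T(χ₁,χ₂)` of the sums `P(j,k)`. -/
def Tmel2 (ψ : AddChar F ℂ) (A₄ : MulChar F ℂ) (a : F) (χ₁ χ₂ : MulChar F ℂ) : ℂ :=
  ∑ j ∈ univ.filter (fun j : F => j ≠ 0), ∑ k ∈ univ.filter (fun k : F => k ≠ 0),
    χ₁ j * χ₂ k * Pkatz ψ A₄ a j k

end

section Helpers

variable {F : Type} [Field F]

/-! ### Values of multiplicative characters -/

lemma mulChar_val_zero (χ : MulChar F ℂ) : χ 0 = 0 :=
  χ.map_nonunit not_isUnit_zero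

lemma mulChar_inv_val (χ : MulChar F ℂ) (x : F) : χ⁻¹ x = (χ x)⁻¹ := by
  by_cases hx : x = 0
  · simp [hx, mulChar_val_zero]
  · rw [MulChar.inv_apply']
    apply eq_inv_of_mul_eq_one_left
    rw [← map_mul, inv_mul_cancel₀ hx, map_one]

lemma mulChar_val_inv (χ : MulChar F ℂ) (x : F) : χ x⁻¹ = (χ x)⁻¹ := by
  rw [← MulChar.inv_apply', mulChar_inv_val]

lemma mulChar_ne_zero (χ : MulChar F ℂ) {x : F} (hx : x ≠ 0) : χ x ≠ 0 :=
  ((isUnit_iff_ne_zero.mpr hx).map χ).ne_zero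

lemma quad_inv (φ : MulChar F ℂ) (hφ2 : φ ^ 2 = 1) : φ⁻¹ = φ :=
  inv_eq_of_mul_eq_one_left (by rw [← pow_two, hφ2])

lemma quad_mul_self (φ : MulChar F ℂ) (hφ2 : φ ^ 2 = 1) {x : F} (hx : x ≠ 0) :
    φ x * φ x = 1 := by
  rw [← MulChar.mul_apply, ← pow_two, hφ2, MulChar.one_apply (isUnit_iff_ne_zero.mpr hx)]

lemma four_ne_zero_of_two (h2 : (2 : F) ≠ 0) : (4 : F) ≠ 0 := by
  rw [show (4 : F) = 2 * 2 by norm_num]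
  exact mul_ne_zero h2 h2

variable [Fintype F]

lemma two_ne_zero_of_card (hq : Fintype.card F % 4 = 1) : (2 : F) ≠ 0 := by
  apply Ring.two_ne_zero
  intro h
  have := FiniteField.even_card_of_char_two h
  omega

variable [DecidableEq F]

/-! ### The quadratic character -/

/-- A nontrivial character with trivial square is the quadratic character. -/
lemma eq_quadraticChar (φ : MulChar F ℂ) (hφ : φ ≠ 1) (hφ2 : φ ^ 2 = 1) (x : F) :
    φ x = ((quadraticChar F x : ℤ) : ℂ) := by
  have hsq : ∀ y : F, y ≠ 0 → φ y * φ y = 1 := fun _ => quad_mul_self φ hφ2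
  have hS : ∀ y : F, y ≠ 0 → IsSquare y → φ y = 1 := by
    rintro y hy ⟨b, rfl⟩
    rw [map_mul]
    exact hsq b (by rintro rfl; simp at hy)
  by_cases hx : x = 0
  · simp [hx, mulChar_val_zero]
  by_cases hxs : IsSquare x
  · rw [hS x hx hxs, (quadraticChar_one_iff_isSquare hx).mpr hxs]; simp
  obtain ⟨a, ha⟩ := (MulChar.ne_one_iff).mp hφ
  have ha0 : (a : F) ≠ 0 := a.ne_zero
  have hans : ¬ IsSquare (a : F) := fun h => ha (hS _ ha0 h)
  have ham : φ a = -1 := (mul_self_eq_one_iff.mp (hsq _ ha0)).resolve_left ha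
  have hqx := quadraticChar_neg_one_iff_not_isSquare.mpr hxs
  have hqa := quadraticChar_neg_one_iff_not_isSquare.mpr hans
  have hxa : IsSquare (x * a) := by
    rw [← quadraticChar_one_iff_isSquare (mul_ne_zero hx ha0), map_mul, hqx, hqa]; norm_num
  have := hS _ (mul_ne_zero hx ha0) hxa
  rw [map_mul, ham] at this
  rw [hqx]
  push_cast
  linear_combination -this

/-- Sums over squares: each `v` has `1 + φ(v)` square roots. -/
lemma sum_comp_sq (h2 : (2 : F) ≠ 0) (φ : MulChar F ℂ) (hφ : φ ≠ 1) (hφ2 : φ ^ 2 = 1)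
    (g : F → ℂ) : ∑ w : F, g (w ^ 2) = ∑ v : F, (1 + φ v) * g v := by
  have hF : ringChar F ≠ 2 := by
    intro h
    apply h2
    have := ringChar.Nat.cast_ringChar (R := F)
    rw [h] at this
    exact_mod_cast this
  rw [← Finset.sum_fiberwise (s := univ) (g := fun w : F => w ^ 2) (f := fun w => g (w ^ 2))]
  refine Finset.sum_congr rfl fun v _ => ?_
  rw [Finset.sum_congr rfl (g := fun _ => g v) (fun w hw => by rw [(mem_filter.mp hw).2]),
    Finset.sum_const, nsmul_eq_mul]
  congr 1
  have h := quadraticChar_card_sqrts hF v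
  have hc : ({w : F | w ^ 2 = v}.toFinset) = univ.filter (fun w : F => w ^ 2 = v) := by
    ext; simp
  rw [hc] at h
  rw [eq_quadraticChar φ hφ hφ2, add_comm]
  exact_mod_cast h

/-! ### Gauss sums -/

/-- The Gauss sum expansion of `χ⁻¹(a)`, valid also at `a = 0` because `χ` is nontrivial. -/
lemma gauss_expand (ψ : AddChar F ℂ) (χ : MulChar F ℂ) (hχ : χ ≠ 1) (a : F) :
    gaussSum χ ψ * χ⁻¹ a = ∑ m : F, χ m * ψ (m * a) := by
  by_cases ha : a = 0
  · simp [ha, mulChar_val_zero, MulChar.sum_eq_zero_of_ne_one hχ]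
  have h := gaussSum_mulShift χ ψ (Units.mk0 a ha)
  have hχa := mulChar_ne_zero χ ha
  rw [mulChar_inv_val, ← h, gaussSum]
  simp only [Units.val_mk0, AddChar.mulShift_apply]
  rw [mul_comm, inv_mul_cancel_left₀ hχa]
  exact Finset.sum_congr rfl fun m _ => by rw [mul_comm a m]

/-- The quadratic Gauss sum with a linear term, by completing the square. -/
lemma quad_gauss (h2 : (2 : F) ≠ 0) (ψ : AddChar F ℂ) (hψ : ψ ≠ 1) (φ : MulChar F ℂ)
    (hφ : φ ≠ 1) (hφ2 : φ ^ 2 = 1) {m : F} (hm : m ≠ 0) (r : F) :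
    ∑ t : F, ψ (m * t ^ 2 + r * t) = gaussSum φ ψ * φ m * ψ (-(r ^ 2 / (4 * m))) := by
  have h4 : (4 : F) ≠ 0 := four_ne_zero_of_two h2
  have h1 : ∑ t : F, ψ (m * t ^ 2 + r * t)
      = ∑ t : F, ψ (t ^ 2 * m) * ψ (-(r ^ 2 / (4 * m))) := by
    rw [← Equiv.sum_comp (Equiv.subRight (r / (2 * m)))]
    refine Finset.sum_congr rfl fun t _ => ?_
    rw [← AddChar.map_add_eq_mul]
    congr 1
    simp only [Equiv.subRight_apply]
    have : (4 : F) = 2 * 2 := by norm_num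
    rw [this]
    field_simp
    ring
  rw [h1, ← Finset.sum_mul, sum_comp_sq h2 φ hφ hφ2 (fun v => ψ (v * m))]
  simp only [add_mul, one_mul, Finset.sum_add_distrib]
  rw [AddChar.sum_mulShift m (AddChar.IsPrimitive.of_ne_one hψ), if_neg hm, ← gauss_expand ψ φ hφ m,
    quad_inv φ hφ2]
  simp

/-! ### Bessel sums and the Euler transformation -/

/-- Finite field Bessel sums: `Σ_t χ⁻¹(t² - c) ψ(rt)` as a twisted Kloosterman sum. -/
lemma bessel_kloosterman (h2 : (2 : F) ≠ 0) (ψ : AddChar F ℂ) (hψ : ψ ≠ 1) (φ : MulChar F ℂ)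
    (hφ : φ ≠ 1) (hφ2 : φ ^ 2 = 1) (χ : MulChar F ℂ) (hχ : χ ≠ 1) (c r : F) :
    gaussSum χ ψ * ∑ t : F, χ⁻¹ (t ^ 2 - c) * ψ (r * t) =
      gaussSum φ ψ * ∑ m : F, χ m * φ m * ψ (-(m * c) - r ^ 2 / (4 * m)) := by
  have h1 : ∀ t : F, gaussSum χ ψ * (χ⁻¹ (t ^ 2 - c) * ψ (r * t))
      = ∑ m : F, χ m * ψ (-(m * c)) * ψ (m * t ^ 2 + r * t) := by
    intro t
    rw [← mul_assoc, gauss_expand ψ χ hχ, Finset.sum_mul]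
    refine Finset.sum_congr rfl fun m _ => ?_
    rw [mul_assoc, mul_assoc, ← AddChar.map_add_eq_mul, ← AddChar.map_add_eq_mul]
    ring_nf
  rw [Finset.mul_sum, Finset.sum_congr rfl fun t _ => h1 t, Finset.sum_comm, Finset.mul_sum]
  refine Finset.sum_congr rfl fun m _ => ?_
  rw [← Finset.mul_sum]
  by_cases hm : m = 0
  · simp [hm, mulChar_val_zero]
  rw [quad_gauss h2 ψ hψ φ hφ hφ2 hm, sub_eq_add_neg, AddChar.map_add_eq_mul]
  ring

/-- The finite field analogue of the symmetry `K_ν = K_{-ν}` of Bessel functions. The parameter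
`s` is placed so that the identity remains valid at `s = 0`. -/
lemma bessel_symm (h2 : (2 : F) ≠ 0) (ψ : AddChar F ℂ) (hψ : ψ ≠ 1) (φ : MulChar F ℂ)
    (hφ : φ ≠ 1) (hφ2 : φ ^ 2 = 1) (D : MulChar F ℂ) (hD : D ≠ 1) (s : F) {r : F} (hr : r ≠ 0) :
    gaussSum D⁻¹ ψ * ∑ t : F, D (t ^ 2 - 1) * ψ (r * s * t) =
      D 4 * D⁻¹ r ^ 2 * (gaussSum D ψ * ∑ t : F, D⁻¹ (t ^ 2 - s ^ 2) * ψ (r * t)) := by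
  have h4 : (4 : F) ≠ 0 := four_ne_zero_of_two h2
  have hL := bessel_kloosterman h2 ψ hψ φ hφ hφ2 D⁻¹ (inv_ne_one.mpr hD) 1 (r * s)
  rw [inv_inv] at hL
  rw [hL, bessel_kloosterman h2 ψ hψ φ hφ hφ2 D hD (s ^ 2) r, mul_left_comm]
  congr 1
  -- The substitution `m = r² / (4n)` exchanges the two Kloosterman sums.
  have hinv : Function.Involutive (fun n : F => r ^ 2 / (4 * n)) := by
    intro n
    by_cases hn : n = 0
    · simp [hn]
    · field_simp
  rw [← Equiv.sum_comp hinv.toPerm, Finset.mul_sum]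
  refine Finset.sum_congr rfl fun n _ => ?_
  simp only [Function.Involutive.coe_toPerm]
  by_cases hn : n = 0
  · simp [hn, mulChar_val_zero]
  have hφv : ∀ x : F, x ≠ 0 → φ x * φ x = 1 := fun _ => quad_mul_self φ hφ2
  have hφinv : ∀ x : F, (φ x)⁻¹ = φ x := by
    intro x
    rw [← mulChar_inv_val, quad_inv φ hφ2]
  have e1 : D⁻¹ (r ^ 2 / (4 * n)) = D 4 * D⁻¹ r ^ 2 * D n := by
    simp only [mulChar_inv_val, div_eq_mul_inv, map_mul, mulChar_val_inv, map_pow, mul_inv, inv_inv,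
      inv_pow]
    ring
  have hφ4 : φ 4 = 1 := by
    have : (4 : F) = 2 * 2 := by norm_num
    rw [this, map_mul, hφv _ h2]
  have e2 : φ (r ^ 2 / (4 * n)) = φ n := by
    rw [div_eq_mul_inv, map_mul, mulChar_val_inv, map_mul, hφ4, one_mul, hφinv, pow_two, map_mul,
      hφv r hr, one_mul]
  have e3 : -(r ^ 2 / (4 * n) * 1) - (r * s) ^ 2 / (4 * (r ^ 2 / (4 * n)))
      = -(n * s ^ 2) - r ^ 2 / (4 * n) := by
    field_simp
    ring
  rw [e1, e2, e3]
  ring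

/-- The finite field analogue of the symmetry in `a, b` of Euler's integral for `₂F₁(a, b; c)`: expand
`D̄²φ` and `φ` by Gauss sums and apply `bessel_symm` to the inner sums. -/
lemma euler_symm (h2 : (2 : F) ≠ 0) (ψ : AddChar F ℂ) (hψ : ψ ≠ 1) (φ : MulChar F ℂ)
    (hφ : φ ≠ 1) (hφ2 : φ ^ 2 = 1) (D : MulChar F ℂ) (hD : D ≠ 1) (hD2 : D ^ 2 * φ ≠ 1) (s : F) :
    gaussSum D⁻¹ ψ * gaussSum (D ^ 2 * φ) ψ *
        ∑ t : F, D (t ^ 2 - 1) * (D⁻¹ ^ 2 * φ) (t * s - 1) =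
      D 4 * gaussSum D ψ * gaussSum φ ψ * ∑ u : F, D⁻¹ (u ^ 2 - s ^ 2) * φ (u - 1) := by
  have hinv : (D ^ 2 * φ)⁻¹ = D⁻¹ ^ 2 * φ := by
    rw [mul_inv, quad_inv φ hφ2, inv_pow]
  have hA : gaussSum (D ^ 2 * φ) ψ * ∑ t : F, D (t ^ 2 - 1) * (D⁻¹ ^ 2 * φ) (t * s - 1)
      = ∑ r : F, (D ^ 2 * φ) r * ψ (-r) * ∑ t : F, D (t ^ 2 - 1) * ψ (r * s * t) := by
    simp_rw [Finset.mul_sum]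
    rw [Finset.sum_comm]
    refine Finset.sum_congr rfl fun t _ => ?_
    rw [mul_left_comm, ← hinv, gauss_expand ψ _ hD2, Finset.mul_sum]
    refine Finset.sum_congr rfl fun r _ => ?_
    rw [show r * (t * s - 1) = -r + r * s * t by ring, AddChar.map_add_eq_mul]
    ring
  have hB : gaussSum φ ψ * ∑ u : F, D⁻¹ (u ^ 2 - s ^ 2) * φ (u - 1)
      = ∑ r : F, φ r * ψ (-r) * ∑ t : F, D⁻¹ (t ^ 2 - s ^ 2) * ψ (r * t) := by
    simp_rw [Finset.mul_sum]
    rw [Finset.sum_comm]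
    refine Finset.sum_congr rfl fun t _ => ?_
    have := gauss_expand ψ φ hφ (t - 1)
    rw [quad_inv φ hφ2] at this
    rw [mul_left_comm, this, Finset.mul_sum]
    refine Finset.sum_congr rfl fun r _ => ?_
    rw [show r * (t - 1) = -r + r * t by ring, AddChar.map_add_eq_mul]
    ring
  rw [mul_assoc, hA, mul_assoc (D 4 * gaussSum D ψ), hB, Finset.mul_sum, Finset.mul_sum]
  refine Finset.sum_congr rfl fun r _ => ?_
  by_cases hr : r = 0
  · simp [hr, mulChar_val_zero]
  rw [mul_left_comm, bessel_symm h2 ψ hψ φ hφ hφ2 D hD s hr]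
  have hDr := mulChar_ne_zero D hr
  simp only [MulChar.mul_apply, MulChar.pow_apply' _ two_ne_zero, mulChar_inv_val]
  field_simp

/-! ### Reduction of the two sides -/

/-- The sum of `φ` over the fibre of `w ↦ w + 1/w` above `v` is `φ(v + 2) + φ(v - 2)`: a point `w` of
the fibre satisfies `(w + 1)² = (v + 2) w`, and there are `1 + φ(v² - 4)` of them. -/
lemma sum_joukowski (h2 : (2 : F) ≠ 0) (φ : MulChar F ℂ)
    (hφ : φ ≠ 1) (hφ2 : φ ^ 2 = 1) (hneg : φ (-1) = 1) (f : F → ℂ) :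
    ∑ w : F, φ w * f (w + w⁻¹) = ∑ v : F, (φ (v + 2) + φ (v - 2)) * f v := by
  have hφv : ∀ x : F, x ≠ 0 → φ x * φ x = 1 := fun _ => quad_mul_self φ hφ2
  rw [← Finset.sum_fiberwise (s := univ) (g := fun w : F => w + w⁻¹)]
  refine Finset.sum_congr rfl fun v _ => ?_
  rw [Finset.sum_congr rfl (g := fun w => φ w * f v)
    (fun w hw => by rw [(mem_filter.mp hw).2]), ← Finset.sum_mul]
  congr 1
  -- On nonzero `w` the fibre is the root set of a quadratic; `w = 0` has weight `φ 0 = 0`.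
  have hfib : ∑ w ∈ univ.filter (fun w : F => w + w⁻¹ = v), φ w
      = ∑ w : F, if (2 * w - v) ^ 2 = v ^ 2 - 4 then φ w else 0 := by
    rw [Finset.sum_filter]
    refine Finset.sum_congr rfl fun w _ => ?_
    by_cases hw : w = 0
    · simp [hw, mulChar_val_zero]
    have : (w + w⁻¹ = v) ↔ ((2 * w - v) ^ 2 = v ^ 2 - 4) := by
      have h4 : (4 : F) ≠ 0 := four_ne_zero_of_two h2
      constructor
      · rintro rfl
        field_simp
        ring
      · intro h
        have : w * w + 1 = v * w := by
          apply mul_left_cancel₀ h4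
          linear_combination h
        field_simp
        linear_combination this
    simp only [this]
  rw [hfib]
  have hroot : ∀ w : F, (2 * w - v) ^ 2 = v ^ 2 - 4 → (w + 1) ^ 2 = (v + 2) * w := by
    intro w h
    have h4 : (4 : F) ≠ 0 := four_ne_zero_of_two h2
    apply mul_left_cancel₀ h4
    linear_combination h
  by_cases hv : v + 2 = 0
  · have hv' : v = -2 := by linear_combination hv
    rw [Finset.sum_eq_single (-1)]
    · subst hv'
      have hm4 : (-2 - 2 : F) = -1 * (2 * 2) := by norm_num
      rw [if_pos (by ring), hneg, hm4, map_mul, map_mul, hφv _ h2, hneg]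
      simp [mulChar_val_zero]
    · intro w _ hw
      rw [if_neg]
      intro h
      have := hroot w h
      rw [hv, zero_mul] at this
      apply hw
      linear_combination pow_eq_zero_iff (two_ne_zero) |>.mp this
    · simp
  · have hval : ∀ w : F, (if (2 * w - v) ^ 2 = v ^ 2 - 4 then φ w else 0)
        = φ (v + 2) * (if (2 * w - v) ^ 2 = v ^ 2 - 4 then 1 else 0) := by
      intro w
      split_ifs with h
      · have h1 := hroot w h
        have hw1 : w + 1 ≠ 0 := by
          intro h0
          have hw : w = -1 := by linear_combination h0
          rw [h0, hw] at h1
          apply hv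
          linear_combination h1
        have h3 := congrArg φ h1
        rw [pow_two, map_mul, map_mul, hφv _ hw1] at h3
        calc φ w = (φ (v + 2) * φ (v + 2)) * φ w := by rw [hφv _ hv, one_mul]
          _ = φ (v + 2) * (φ (v + 2) * φ w) := by ring
          _ = φ (v + 2) * 1 := by rw [← h3]
      · simp
    rw [Finset.sum_congr rfl fun w _ => hval w, ← Finset.mul_sum]
    have hshift : ∑ w : F, (if (2 * w - v) ^ 2 = v ^ 2 - 4 then (1 : ℂ) else 0)
        = ∑ y : F, if y ^ 2 = v ^ 2 - 4 then (1 : ℂ) else 0 := by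
      let e : F ≃ F := (Equiv.mulLeft₀ 2 h2).trans (Equiv.subRight v)
      rw [← Equiv.sum_comp e (fun y : F => if y ^ 2 = v ^ 2 - 4 then (1 : ℂ) else 0)]
      rfl
    rw [hshift, sum_comp_sq h2 φ hφ hφ2 (fun x => if x = v ^ 2 - 4 then (1 : ℂ) else 0)]
    simp only [mul_ite, mul_one, mul_zero, Finset.sum_ite_eq', Finset.mem_univ, if_true]
    rw [show v ^ 2 - 4 = (v + 2) * (v - 2) by ring, map_mul, mul_add, ← mul_assoc, hφv _ hv]
    ring

/-- The substitution `t = (1 + x) / (1 - x)` in `h(D, j)`. -/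
lemma hKatz_eq (h2 : (2 : F) ≠ 0) (A₄ D : MulChar F ℂ) (hφ2 : (A₄ ^ 2) ^ 2 = 1) (j : F) :
    hKatz A₄ D j = D⁻¹ 4 * ∑ t : F, D (t ^ 2 - 1) *
      (D⁻¹ ^ 2 * A₄ ^ 2) (t * (j ^ 2 + 1) - 2 * j) := by
  have hφv : ∀ x : F, x ≠ 0 → (A₄ ^ 2) x * (A₄ ^ 2) x = 1 := fun _ => quad_mul_self _ hφ2
  unfold hKatz
  set φ := A₄ ^ 2 with hφ
  have hL : ∑ x ∈ univ.filter (fun x : F => x ≠ 0),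
        D x * φ (1 - x) * (D⁻¹ ^ 2 * φ) (x * (j + 1) ^ 2 + (j - 1) ^ 2)
      = ∑ x ∈ univ.filter (fun x : F => x ≠ 1),
        D x * φ (1 - x) * (D⁻¹ ^ 2 * φ) (x * (j + 1) ^ 2 + (j - 1) ^ 2) := by
    rw [Finset.sum_filter, Finset.sum_filter]
    refine Finset.sum_congr rfl fun x _ => ?_
    by_cases h0 : x = 0
    · simp [h0, mulChar_val_zero]
    by_cases h1 : x = 1
    · simp [h1, mulChar_val_zero]
    simp [h0, h1]
  have hR : ∑ t : F, D (t ^ 2 - 1) * (D⁻¹ ^ 2 * φ) (t * (j ^ 2 + 1) - 2 * j)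
      = ∑ t ∈ univ.filter (fun t : F => t ≠ -1),
        D (t ^ 2 - 1) * (D⁻¹ ^ 2 * φ) (t * (j ^ 2 + 1) - 2 * j) := by
    rw [Finset.sum_filter]
    refine Finset.sum_congr rfl fun t _ => ?_
    by_cases h : t = -1
    · simp [h, mulChar_val_zero]
    · simp [h]
  rw [hL, hR, Finset.mul_sum]
  have hp : ∀ t : F, t ≠ -1 → t + 1 ≠ 0 := fun t ht h => ht (by linear_combination h)
  have hm : ∀ x : F, x ≠ 1 → 1 - x ≠ 0 := fun x hx h => hx (by linear_combination -h)
  symm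
  refine Finset.sum_nbij' (fun t => (t - 1) / (t + 1)) (fun x => (1 + x) / (1 - x)) ?_ ?_ ?_ ?_ ?_
  · intro t ht
    have ht := hp t (mem_filter.mp ht).2
    simp only [mem_filter, mem_univ, true_and]
    intro h
    rw [div_eq_one_iff_eq ht] at h
    apply h2
    linear_combination -h
  · intro x hx
    have hx := hm x (mem_filter.mp hx).2
    simp only [mem_filter, mem_univ, true_and]
    intro h
    rw [div_eq_iff hx] at h
    apply h2
    linear_combination h
  · intro t ht
    have ht := hp t (mem_filter.mp ht).2
    have h3 : 1 - (t - 1) / (t + 1) ≠ 0 := by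
      rw [show 1 - (t - 1) / (t + 1) = 2 / (t + 1) by field_simp; ring]
      exact div_ne_zero h2 ht
    rw [div_eq_iff h3]
    field_simp
    ring
  · intro x hx
    have hx := hm x (mem_filter.mp hx).2
    have h3 : (1 + x) / (1 - x) + 1 ≠ 0 := by
      rw [show (1 + x) / (1 - x) + 1 = 2 / (1 - x) by field_simp; ring]
      exact div_ne_zero h2 hx
    rw [div_eq_iff h3]
    field_simp
    ring
  · intro t ht
    have ht := hp t (mem_filter.mp ht).2
    have e1 : 1 - (t - 1) / (t + 1) = 2 * (t + 1)⁻¹ := by field_simp; ring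
    have e2 : (t - 1) / (t + 1) * (j + 1) ^ 2 + (j - 1) ^ 2
        = 2 * (t + 1)⁻¹ * (t * (j ^ 2 + 1) - 2 * j) := by field_simp; ring
    have e3 : t ^ 2 - 1 = (t - 1) * (t + 1) := by ring
    have e4 : (4 : F) = 2 * 2 := by norm_num
    have hu : (2 * (t + 1)⁻¹ : F) ≠ 0 := mul_ne_zero h2 (inv_ne_zero ht)
    have hD1 := mulChar_ne_zero D ht
    have hD2 := mulChar_ne_zero D h2
    rw [e1, e2, e3, e4, map_mul (D⁻¹ ^ 2 * φ) (2 * (t + 1)⁻¹), MulChar.mul_apply _ _ (2 * (t + 1)⁻¹)]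
    generalize hz : (D⁻¹ ^ 2 * φ) (t * (j ^ 2 + 1) - 2 * j) = Z
    have hfu := hφv _ hu
    calc _ = D⁻¹ (2 * 2) * (D ((t - 1) * (t + 1)) * Z)
              * (φ (2 * (t + 1)⁻¹) * φ (2 * (t + 1)⁻¹)) := by rw [hfu]; ring
      _ = _ := by
        generalize φ (2 * (t + 1)⁻¹) = P
        simp only [mulChar_inv_val, div_eq_mul_inv, map_mul, mulChar_val_inv,
          MulChar.pow_apply' _ two_ne_zero]
        field_simp

/-- The `₂F₁` sum at `j⁴`, reduced through `y = z / j²`, `z = w²` and `w + 1/w = 2u`. -/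
lemma hyp_sum_eq (h2 : (2 : F) ≠ 0) (A₄ D : MulChar F ℂ) (hφ : A₄ ^ 2 ≠ 1)
    (hφ2 : (A₄ ^ 2) ^ 2 = 1) (hneg : (A₄ ^ 2) (-1) = 1) {j s : F} (hj : j ≠ 0)
    (hs : 2 * j * s = j ^ 2 + 1) :
    ∑ y : F, (D * A₄) y * ((D * A₄)⁻¹ * A₄) (y - 1) * D⁻¹ (1 - j ^ 4 * y) =
      (A₄ ^ 2) (2 * j) * D⁻¹ (-4) * D⁻¹ (j ^ 2) *
        ∑ u : F, D⁻¹ (u ^ 2 - s ^ 2) * (A₄ ^ 2) (u - 1) := by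
  have hj2 : j ^ 2 ≠ 0 := pow_ne_zero 2 hj
  have hDD : (D * A₄)⁻¹ * A₄ = D⁻¹ := by rw [mul_inv, inv_mul_cancel_right]
  have hAsq : ∀ w : F, A₄ (w ^ 2) = (A₄ ^ 2) w := fun w => by
    rw [map_pow, MulChar.pow_apply' _ two_ne_zero]
  have hA3 : ∀ z : F, A₄ z⁻¹ = (A₄ ^ 2) z * A₄ z := by
    intro z
    by_cases hz : z = 0
    · simp [hz, mulChar_val_zero]
    have := congrArg (fun χ : MulChar F ℂ => χ z) hφ2
    rw [← pow_mul] at this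
    simp only [MulChar.one_apply (isUnit_iff_ne_zero.mpr hz),
      MulChar.pow_apply' _ (show 2 * 2 ≠ 0 by norm_num)] at this
    rw [mulChar_val_inv, MulChar.pow_apply' _ two_ne_zero]
    have hA0 := mulChar_ne_zero A₄ hz
    field_simp
    linear_combination -this
  -- The substitution `y = z / j²` makes the sum symmetric under `z ↦ 1/z`.
  have hstep1 : ∑ y : F, (D * A₄) y * ((D * A₄)⁻¹ * A₄) (y - 1) * D⁻¹ (1 - j ^ 4 * y)
      = (A₄ ^ 2) j * D⁻¹ (j ^ 2) *
        ∑ z : F, A₄ z * D⁻¹ (4 * s ^ 2 - (z + z⁻¹ + 2)) := by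
    rw [hDD, ← Equiv.sum_comp (Equiv.mulRight₀ (j ^ 2)⁻¹ (inv_ne_zero hj2)), Finset.mul_sum]
    refine Finset.sum_congr rfl fun z _ => ?_
    simp only [Equiv.mulRight₀_apply]
    by_cases hz : z = 0
    · simp [hz, mulChar_val_zero]
    have hfac : (z * (j ^ 2)⁻¹ - 1) * (1 - j ^ 4 * (z * (j ^ 2)⁻¹))
        = z * (4 * s ^ 2 - (z + z⁻¹ + 2)) := by
      have : 4 * s ^ 2 = (j ^ 2 + 1) ^ 2 * (j ^ 2)⁻¹ := by
        rw [← hs]; field_simp; ring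
      rw [this]
      field_simp
      ring
    rw [mul_assoc, ← map_mul, hfac, MulChar.mul_apply, map_mul D⁻¹ z, map_mul A₄,
      ← inv_pow j, hAsq, map_mul D, mulChar_val_inv, inv_pow, mulChar_val_inv, mulChar_inv_val D z,
      mulChar_inv_val D (j ^ 2)]
    have hz' := mulChar_ne_zero D hz
    have : ((A₄ ^ 2) j)⁻¹ = (A₄ ^ 2) j := by rw [← mulChar_inv_val, quad_inv _ hφ2]
    rw [this]
    field_simp
  have hstep2 : 2 * ∑ z : F, A₄ z * D⁻¹ (4 * s ^ 2 - (z + z⁻¹ + 2))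
      = ∑ w : F, (A₄ ^ 2) w * D⁻¹ (4 * s ^ 2 - (w + w⁻¹) ^ 2) := by
    have hflip : ∑ z : F, A₄ z * D⁻¹ (4 * s ^ 2 - (z + z⁻¹ + 2))
        = ∑ z : F, (A₄ ^ 2) z * A₄ z * D⁻¹ (4 * s ^ 2 - (z + z⁻¹ + 2)) := by
      rw [← Equiv.sum_comp (Equiv.inv F)]
      refine Finset.sum_congr rfl fun z _ => ?_
      simp only [Equiv.inv_apply, inv_inv]
      rw [hA3, add_comm z⁻¹ z]
    have hsum := sum_comp_sq h2 (A₄ ^ 2) hφ hφ2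
      (fun z => A₄ z * D⁻¹ (4 * s ^ 2 - (z + z⁻¹ + 2)))
    rw [two_mul]
    nth_rewrite 2 [hflip]
    rw [← Finset.sum_add_distrib]
    calc _ = ∑ z : F, (1 + (A₄ ^ 2) z) * (A₄ z * D⁻¹ (4 * s ^ 2 - (z + z⁻¹ + 2))) :=
          Finset.sum_congr rfl fun z _ => by ring
      _ = _ := by
        rw [← hsum]
        refine Finset.sum_congr rfl fun w _ => ?_
        by_cases hw : w = 0
        · simp [hw, mulChar_val_zero]
        rw [hAsq]
        congr 2
        field_simp
        ring
  have hstep3 : ∑ w : F, (A₄ ^ 2) w * D⁻¹ (4 * s ^ 2 - (w + w⁻¹) ^ 2)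
      = 2 * ∑ v : F, (A₄ ^ 2) (v - 2) * D⁻¹ (4 * s ^ 2 - v ^ 2) := by
    rw [sum_joukowski h2 (A₄ ^ 2) hφ hφ2 hneg (fun v => D⁻¹ (4 * s ^ 2 - v ^ 2))]
    simp only [add_mul, Finset.sum_add_distrib]
    rw [two_mul]
    congr 1
    rw [← Equiv.sum_comp (Equiv.neg F)]
    refine Finset.sum_congr rfl fun v _ => ?_
    simp only [Equiv.neg_apply]
    rw [show -v + 2 = -1 * (v - 2) by ring, map_mul, hneg, one_mul, neg_sq]
  have hstep4 : ∑ v : F, (A₄ ^ 2) (v - 2) * D⁻¹ (4 * s ^ 2 - v ^ 2)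
      = (A₄ ^ 2) 2 * D⁻¹ (-4) * ∑ u : F, D⁻¹ (u ^ 2 - s ^ 2) * (A₄ ^ 2) (u - 1) := by
    rw [← Equiv.sum_comp (Equiv.mulLeft₀ 2 h2), Finset.mul_sum]
    refine Finset.sum_congr rfl fun u _ => ?_
    simp only [Equiv.mulLeft₀_apply]
    rw [show 2 * u - 2 = 2 * (u - 1) by ring,
      show 4 * s ^ 2 - (2 * u) ^ 2 = -4 * (u ^ 2 - s ^ 2) by ring, map_mul, map_mul]
    ring
  have h22 : ∑ z : F, A₄ z * D⁻¹ (4 * s ^ 2 - (z + z⁻¹ + 2))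
      = ∑ v : F, (A₄ ^ 2) (v - 2) * D⁻¹ (4 * s ^ 2 - v ^ 2) :=
    mul_left_cancel₀ (two_ne_zero (α := ℂ)) (hstep2.trans hstep3)
  rw [hstep1, h22, hstep4, map_mul (A₄ ^ 2) 2 j]
  ring

end Helpers

/-- `h(D,j)` as a hypergeometric sum, for `D ∉ {ε, A₄, A̅₄}` and `j ≠ 0`. -/
theorem h_eq_hyp2F1
    (F : Type) [Field F] [Fintype F] [DecidableEq F]
    (hq : Fintype.card F % 4 = 1)
    (ψ : AddChar F ℂ) (hψ : ψ ≠ 1)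
    (A₄ : MulChar F ℂ) (hA₄ : orderOf A₄ = 4)
    (D : MulChar F ℂ) (hD1 : D ≠ 1) (hD2 : D ≠ A₄) (hD3 : D ≠ A₄⁻¹)
    (j : F) (hj : j ≠ 0) :
    hKatz A₄ D j =
      gaussSum D ψ ^ 2 * gaussSum (A₄ ^ 2) ψ / gaussSum (D ^ 2 * A₄ ^ 2) ψ *
        hyp2F1 D (D * A₄) A₄ (j ^ 4) := by
  have h2 : (2 : F) ≠ 0 := two_ne_zero_of_card hq
  have hφ2 : (A₄ ^ 2) ^ 2 = 1 := by 
    rw [← pow_mul, show 2 * 2 = orderOf A₄ by rw [hA₄], pow_orderOf_eq_one]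
  have hφ : A₄ ^ 2 ≠ 1 := by
    intro h
    have := orderOf_dvd_of_pow_eq_one h
    rw [hA₄] at this
    omega
  have hneg : (A₄ ^ 2) (-1) = 1 := by
    have hsq : IsSquare (-1 : F) := FiniteField.isSquare_neg_one_iff.mpr (by omega)
    rw [eq_quadraticChar _ hφ hφ2,
      (quadraticChar_one_iff_isSquare (neg_ne_zero.mpr one_ne_zero)).mpr hsq]
    simp
  -- `D²φ = 1` would force `D` to be a square root of `φ`, hence `D = A₄` or `D = A₄⁻¹`.
  have hDφ : D ^ 2 * A₄ ^ 2 ≠ 1 := by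
    intro h
    have h1 : (D * A₄) ^ 2 = 1 := by rw [mul_pow, h]
    have hne : D * A₄ ≠ 1 := fun h => hD3 (eq_inv_of_mul_eq_one_left h)
    have : D * A₄ = A₄ ^ 2 := by
      ext x
      rw [eq_quadraticChar _ hne h1, eq_quadraticChar _ hφ hφ2]
    rw [pow_two] at this
    exact hD2 (mul_right_cancel this)
  have h2j : 2 * j ≠ 0 := mul_ne_zero h2 hj
  obtain ⟨s, hs⟩ : ∃ s : F, 2 * j * s = j ^ 2 + 1 := ⟨(j ^ 2 + 1) / (2 * j), by field_simp⟩
  have hcard : (Fintype.card F : ℂ) ≠ 0 := Nat.cast_ne_zero.mpr Fintype.card_ne_zero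
  have hprim := AddChar.IsPrimitive.of_ne_one hψ
  have hGD := gaussSum_ne_zero_of_nontrivial hcard (inv_ne_one.mpr hD1) hprim
  have hGDφ := gaussSum_ne_zero_of_nontrivial hcard hDφ hprim
  have hGG : gaussSum D ψ * gaussSum D⁻¹ ψ = D⁻¹ (-1) * Fintype.card F := by
    rw [← gaussSum_mul_gaussSum_eq_card hD1 hprim, ← mul_gaussSum_inv_eq_gaussSum D⁻¹ ψ]
    ring
  have hE := euler_symm h2 ψ hψ (A₄ ^ 2) hφ hφ2 D hD1 hDφ s
  have hH : hKatz A₄ D j = D⁻¹ 4 * (D⁻¹ ^ 2 * A₄ ^ 2) (2 * j) *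
      ∑ t : F, D (t ^ 2 - 1) * (D⁻¹ ^ 2 * A₄ ^ 2) (t * s - 1) := by
    rw [hKatz_eq h2 A₄ D hφ2, mul_assoc, Finset.mul_sum (a := (D⁻¹ ^ 2 * A₄ ^ 2) (2 * j))]
    congr 1
    refine Finset.sum_congr rfl fun t _ => ?_
    rw [← hs, show t * (2 * j * s) - 2 * j = 2 * j * (t * s - 1) by ring, map_mul _ (2 * j)]
    ring
  rw [hyp2F1, hyp_sum_eq h2 A₄ D hφ hφ2 hneg hj hs, hH,
    MulChar.one_apply (isUnit_iff_ne_zero.mpr (pow_ne_zero 4 hj))]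
  set U := ∑ u : F, D⁻¹ (u ^ 2 - s ^ 2) * (A₄ ^ 2) (u - 1)
  set T := ∑ t : F, D (t ^ 2 - 1) * (D⁻¹ ^ 2 * A₄ ^ 2) (t * s - 1)
  have hT : T = D 4 * gaussSum D ψ * gaussSum (A₄ ^ 2) ψ * U /
      (gaussSum D⁻¹ ψ * gaussSum (D ^ 2 * A₄ ^ 2) ψ) := by
    rw [eq_div_iff (mul_ne_zero hGD hGDφ), ← hE]; ring
  have hm1 : D⁻¹ (-4) = D⁻¹ (-1) * D⁻¹ 4 := by rw [← map_mul]; norm_num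
  have h4 : D⁻¹ 4 = D⁻¹ 2 ^ 2 := by rw [← map_pow]; norm_num
  have h44 : D 4 * D⁻¹ 4 = 1 := by
    rw [mulChar_inv_val, mul_inv_cancel₀]
    apply mulChar_ne_zero
    rw [show (4 : F) = 2 * 2 by norm_num]
    exact mul_ne_zero h2 h2
  have hn : D⁻¹ (-1) * D⁻¹ (-1) = 1 := by rw [← map_mul]; norm_num
  have hGinv : gaussSum D ψ * D⁻¹ (-1) / Fintype.card F = 1 / gaussSum D⁻¹ ψ := by
    rw [div_eq_div_iff hcard hGD]
    linear_combination D⁻¹ (-1) * hGG + (Fintype.card F : ℂ) * hn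
  rw [hT, hm1, MulChar.mul_apply _ _ (2 * j), MulChar.pow_apply' _ two_ne_zero, map_mul D⁻¹ 2 j,
    mul_pow, ← h4, map_pow D⁻¹ j 2]
  calc _ = (D 4 * D⁻¹ 4) * (1 / gaussSum D⁻¹ ψ) * (D⁻¹ 4 * D⁻¹ j ^ 2 * (A₄ ^ 2) (2 * j) *
          gaussSum D ψ * gaussSum (A₄ ^ 2) ψ * U / gaussSum (D ^ 2 * A₄ ^ 2) ψ) := by
        field_simp
    _ = _ := by
        rw [h44, ← hGinv]
        ring
end

section
/- For every multiplicative character D of F_q and every z ∈ F_q* with z ∉ {1, −1}, one has the quadratic transformation ₂F₁(D, DA₄; A₄ | z⁴) = D̄⁴(z−1) · ₂F₁(D, D²φ; Dφ | −((z+1)/(z−1))²). -/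
/-!
Write `φ = A₄ ^ 2`. Both sides are sums of a character of order dividing four, weighted by `D⁻¹`
of a rational function of the summation variable, so it suffices to match these rational functions
after a change of variables. Substituting `y = w / z ^ 2` on the left gives the summand
`φ z * A₄ w * D⁻¹ ((1 + z ^ 2) ^ 2 - z ^ 2 * (w + w⁻¹ + 2))`, and substituting
`y = (z - 1) ^ 2 / (z * v)` on the right gives
`φ z * φ v * D⁻¹ ((1 + z ^ 2) ^ 2 - z ^ 2 * (v + 2) ^ 2)`.

The two sums then agree by `sum_quartic`, valid for an arbitrary function `g`:
`∑ w, A₄ w * g (w + w⁻¹) = ∑ v, φ v * g ((v + 2) ^ 2 - 2)`.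
The nonsquare `w` cancel on the left, because `A₄ w⁻¹ = -A₄ w` there; writing `w = a ^ 2` turns
twice the left side into `∑ a, φ a * g ((a + a⁻¹) ^ 2 - 2)`. By `sum_add_inv_fiber`, the sum of
`φ a` over `a + a⁻¹ = c` is `φ (c - 2) + φ (c + 2)`, and since `φ (-1) = 1` both terms contribute
equally, each giving the right side.
-/

open Finset

/-! ### The quadratic character -/

section Helpers

variable {F : Type} [Field F] [Fintype F] [DecidableEq F]

/-- The square of a character of order four is the (complex-valued) quadratic character. -/
lemma sq_eq_quadraticChar (χ : MulChar F ℂ) (hχ : orderOf χ = 4)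
    (x : F) : (χ ^ 2) x = ((quadraticChar F x : ℤ) : ℂ) := by
  have h4 : χ ^ 4 = 1 := hχ ▸ pow_orderOf_eq_one χ
  have hsq : ∀ y : F, IsSquare y → y ≠ 0 → (χ ^ 2) y = 1 := by
    rintro y ⟨a, rfl⟩ h0
    have ha : a ≠ 0 := left_ne_zero_of_mul h0
    have : (χ ^ 2) (a * a) = (χ ^ 4) a := by
      rw [map_mul, ← MulChar.mul_apply, ← pow_add]
    rw [this, h4, MulChar.one_apply ha.isUnit]
  rcases eq_or_ne x 0 with rfl | hx
  · simp [MulChar.map_zero]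
  by_cases hs : IsSquare x
  · rw [hsq x hs hx, (quadraticChar_one_iff_isSquare hx).2 hs]; simp
  have hn1 : quadraticChar F x = -1 := quadraticChar_neg_one_iff_not_isSquare.2 hs
  have hx2 : (χ ^ 2) x * (χ ^ 2) x = 1 := by
    rw [← map_mul]; exact hsq _ ⟨x, rfl⟩ (mul_ne_zero hx hx)
  rcases mul_self_eq_one_iff.1 hx2 with h1 | h1
  · -- if `χ ^ 2` were `1` at one nonsquare, it would be trivial
    exfalso
    have htriv : χ ^ 2 = 1 := by
      ext u
      rw [MulChar.one_apply u.isUnit]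
      by_cases hu : IsSquare (u : F)
      · exact hsq _ hu u.ne_zero
      · have hu1 : quadraticChar F (u : F) = -1 := quadraticChar_neg_one_iff_not_isSquare.2 hu
        have hm : (x * u : F) ≠ 0 := mul_ne_zero hx u.ne_zero
        have hxu : IsSquare (x * u : F) := by
          rw [← quadraticChar_one_iff_isSquare hm, map_mul, hn1, hu1]; norm_num
        have := hsq _ hxu hm
        rwa [map_mul, h1, one_mul] at this
    have := orderOf_dvd_of_pow_eq_one htriv
    rw [hχ] at this
    omega
  · rw [h1, hn1]; simp

lemma card_sqrts (hF : ringChar F ≠ 2) (χ : MulChar F ℂ) (hχ : orderOf χ = 4) (x : F) :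
    ((univ.filter (fun a : F => a ^ 2 = x)).card : ℂ) = (χ ^ 2) x + 1 := by
  rw [sq_eq_quadraticChar χ hχ]
  have := quadraticChar_card_sqrts hF x
  rw [Set.toFinset_ofPred] at this
  exact_mod_cast this

lemma sum_comp_sq_s10 (hF : ringChar F ≠ 2) (χ : MulChar F ℂ) (hχ : orderOf χ = 4) (f : F → ℂ) :
    ∑ a : F, f (a ^ 2) = ∑ w : F, ((χ ^ 2) w + 1) * f w := by
  rw [← Finset.sum_fiberwise univ (fun a : F => a ^ 2)]
  refine Finset.sum_congr rfl fun w _ => ?_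
  rw [← card_sqrts hF χ hχ, ← nsmul_eq_mul, ← Finset.sum_const]
  refine Finset.sum_congr rfl fun a ha => ?_
  rw [(Finset.mem_filter.1 ha).2]

lemma sq_sq_apply (χ : MulChar F ℂ) (hχ : orderOf χ = 4) {a : F} (ha : a ≠ 0) :
    (χ ^ 2) (a ^ 2) = 1 := by
  have h4 : χ ^ 4 = 1 := hχ ▸ pow_orderOf_eq_one χ
  rw [map_pow, sq ((χ ^ 2) a), ← MulChar.mul_apply, ← pow_add, h4, MulChar.one_apply ha.isUnit]

lemma sq_inv_apply (χ : MulChar F ℂ) (hχ : orderOf χ = 4) (a : F) :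
    (χ ^ 2) a⁻¹ = (χ ^ 2) a := by
  have h4 : χ ^ 4 = 1 := hχ ▸ pow_orderOf_eq_one χ
  rw [← MulChar.inv_apply']
  congr 1
  rw [inv_eq_iff_mul_eq_one, ← pow_add, h4]

/-! ### The quartic summation identity -/

/-- With `φ = χ ^ 2`, the sum of `φ a` over the solutions of `a + a⁻¹ = c`. Each nonzero
solution has `(a + 1) ^ 2 = a * (c + 2)`, hence `φ a = φ (c + 2)` unless `a = -1`, and there are
`1 + φ (c ^ 2 - 4)` of them. For `c = 0` the junk solution `a = 0` has weight `φ 0 = 0`. -/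
lemma sum_add_inv_fiber (hF : ringChar F ≠ 2) (χ : MulChar F ℂ) (hχ : orderOf χ = 4)
    (hneg : (χ ^ 2) (-1) = 1) (c : F) :
    ∑ a ∈ univ.filter (fun a : F => a + a⁻¹ = c), (χ ^ 2) a =
      (χ ^ 2) (c - 2) + (χ ^ 2) (c + 2) := by
  have h2 : (2 : F) ≠ 0 := Ring.two_ne_zero hF
  by_cases hc : c = -2
  · subst hc
    have h4 : (-2 - 2 : F) = -1 * 2 ^ 2 := by ring
    rw [h4, map_mul, hneg, sq_sq_apply χ hχ h2, neg_add_cancel, MulChar.map_zero, mul_one, add_zero,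
      ← hneg]
    refine Finset.sum_eq_single_of_mem (-1) ?_ ?_
    · simp only [mem_filter, mem_univ, true_and, inv_neg, inv_one]; ring
    · intro b hb hb1
      have hb' := (Finset.mem_filter.1 hb).2
      rcases eq_or_ne b 0 with rfl | h0
      · simp [MulChar.map_zero]
      · exfalso
        apply hb1
        have : (b + 1) ^ 2 = b * (b + b⁻¹ + 2) := by field_simp; ring
        rw [hb', neg_add_cancel, mul_zero] at this
        linear_combination pow_eq_zero_iff (two_ne_zero) |>.1 this
  · have hc2 : c + 2 ≠ 0 := fun h => hc (by linear_combination h)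
    have hval : ∀ a : F, a ≠ 0 → a + a⁻¹ = c → (χ ^ 2) a = (χ ^ 2) (c + 2) := by
      intro a ha h
      have e : (a + 1) ^ 2 = a * (c + 2) := by
        rw [← h]; field_simp; ring
      have h1 : a + 1 ≠ 0 := by
        intro h1
        rw [h1] at e
        exact mul_ne_zero ha hc2 (by rw [← e]; ring)
      have e' : a = (c + 2)⁻¹ * (a + 1) ^ 2 := by rw [e]; field_simp
      rw [e', map_mul, sq_sq_apply χ hχ h1, mul_one, sq_inv_apply χ hχ]
    have hsum : ∑ a ∈ univ.filter (fun a : F => a + a⁻¹ = c), (χ ^ 2) a =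
        ∑ a ∈ univ.filter (fun a : F => a ^ 2 - c * a + 1 = 0), (χ ^ 2) (c + 2) := by
      rw [Finset.sum_filter, Finset.sum_filter]
      refine Finset.sum_congr rfl fun a _ => ?_
      rcases eq_or_ne a 0 with rfl | ha
      · simp [MulChar.map_zero]
      · have : a + a⁻¹ = c ↔ a ^ 2 - c * a + 1 = 0 := by
          constructor
          · rintro rfl; field_simp; ring
          · intro h; field_simp; linear_combination h
        simp only [← this]
        split_ifs with h
        · exact hval a ha h
        · rfl
    have hcard : (univ.filter (fun a : F => a ^ 2 - c * a + 1 = 0)).card =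
        (univ.filter (fun b : F => b ^ 2 = c ^ 2 - 4)).card := by
      refine Finset.card_bij' (fun a _ => 2 * a - c) (fun b _ => (b + c) / 2) ?_ ?_ ?_ ?_
      · intro a ha
        simp only [mem_filter, mem_univ, true_and] at ha ⊢
        linear_combination 4 * ha
      · intro b hb
        simp only [mem_filter, mem_univ, true_and] at hb ⊢
        field_simp
        linear_combination hb
      · intro a _; field_simp; ring
      · intro b _; field_simp; ring
    rw [hsum, Finset.sum_const, hcard, nsmul_eq_mul, card_sqrts hF χ hχ]
    have e : c ^ 2 - 4 = (c - 2) * (c + 2) := by ring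
    have hs := sq_sq_apply χ hχ hc2
    rw [map_pow, sq ((χ ^ 2) (c + 2))] at hs
    rw [e, map_mul]
    linear_combination (χ ^ 2) (c - 2) * hs

/-- The substitution behind the quadratic transformation: `w + w⁻¹` against `χ` of order four has
the same weighted value distribution as `(v + 2) ^ 2 - 2` against `χ ^ 2`. On the left only
squares `w = a ^ 2` contribute, since the nonsquares cancel under `w ↦ w⁻¹`. -/
lemma sum_quartic (hF : ringChar F ≠ 2) (χ : MulChar F ℂ) (hχ : orderOf χ = 4)
    (hneg : (χ ^ 2) (-1) = 1) (g : F → ℂ) :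
    ∑ w : F, χ w * g (w + w⁻¹) = ∑ v : F, (χ ^ 2) v * g ((v + 2) ^ 2 - 2) := by
  have h4 : χ ^ 4 = 1 := hχ ▸ pow_orderOf_eq_one χ
  have hL : ∑ a : F, χ (a ^ 2) * g (a ^ 2 + (a ^ 2)⁻¹) = 2 * ∑ w : F, χ w * g (w + w⁻¹) := by
    rw [sum_comp_sq_s10 hF χ hχ (fun w => χ w * g (w + w⁻¹))]
    simp only [add_mul, one_mul, Finset.sum_add_distrib]
    rw [two_mul]
    congr 1
    refine Fintype.sum_equiv (Equiv.inv F) _ _ fun w => ?_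
    have : χ ^ 2 * χ = χ⁻¹ := by
      rw [eq_inv_iff_mul_eq_one, ← h4]; rfl
    rw [← mul_assoc, ← MulChar.mul_apply, this, MulChar.inv_apply']
    simp [add_comm, Equiv.inv_apply]
  have hM : ∑ a : F, χ (a ^ 2) * g (a ^ 2 + (a ^ 2)⁻¹) =
      ∑ c : F, ((χ ^ 2) (c - 2) + (χ ^ 2) (c + 2)) * g (c ^ 2 - 2) := by
    rw [← Finset.sum_fiberwise univ (fun a : F => a + a⁻¹)]
    refine Finset.sum_congr rfl fun c _ => ?_
    rw [← sum_add_inv_fiber hF χ hχ hneg, Finset.sum_mul]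
    refine Finset.sum_congr rfl fun a ha => ?_
    have hac := (Finset.mem_filter.1 ha).2
    rcases eq_or_ne a 0 with rfl | h0
    · simp [MulChar.map_zero]
    · rw [← hac, map_pow, MulChar.pow_apply' _ two_ne_zero]
      congr 2
      field_simp
      ring
  have hR1 : ∑ c : F, (χ ^ 2) (c - 2) * g (c ^ 2 - 2) =
      ∑ v : F, (χ ^ 2) v * g ((v + 2) ^ 2 - 2) :=
    Fintype.sum_equiv (Equiv.subRight 2) _ _ fun c => by simp
  have hR2 : ∑ c : F, (χ ^ 2) (c + 2) * g (c ^ 2 - 2) =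
      ∑ c : F, (χ ^ 2) (c - 2) * g (c ^ 2 - 2) :=
    Fintype.sum_equiv (Equiv.neg F) _ _ fun c => by
      have : -c - 2 = -1 * (c + 2) := by ring
      rw [Equiv.neg_apply, this, map_mul, hneg, one_mul, neg_sq]
  have : (2 : ℂ) * ∑ w : F, χ w * g (w + w⁻¹) =
      2 * ∑ v : F, (χ ^ 2) v * g ((v + 2) ^ 2 - 2) := by
    rw [← hL, hM]
    simp only [add_mul, Finset.sum_add_distrib]
    rw [hR2, hR1, two_mul]
  exact mul_left_cancel₀ two_ne_zero this

end Helpers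

/-! ### The transformation -/

/-- The quadratic transformation for the finite field `₂F₁`. -/
theorem hyp2F1_quadratic_transformation
    (F : Type) [Field F] [Fintype F] [DecidableEq F]
    (hq : Fintype.card F % 4 = 1)
    (A₄ : MulChar F ℂ) (hA₄ : orderOf A₄ = 4)
    (D : MulChar F ℂ) (z : F) (hz0 : z ≠ 0) (hz1 : z ≠ 1) (hz2 : z ≠ -1) :
    hyp2F1 D (D * A₄) A₄ (z ^ 4) =
      (D⁻¹ ^ 4) (z - 1) *
        hyp2F1 D (D ^ 2 * A₄ ^ 2) (D * A₄ ^ 2) (-((z + 1) / (z - 1)) ^ 2) := by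
  have hF : ringChar F ≠ 2 := by
    intro h
    have := FiniteField.even_card_of_char_two h
    omega
  have hneg : (A₄ ^ 2) (-1) = 1 := by
    have hs : IsSquare (-1 : F) := FiniteField.isSquare_neg_one_iff.2 (by omega)
    rw [sq_eq_quadraticChar A₄ hA₄,
      (quadraticChar_one_iff_isSquare (neg_ne_zero.2 one_ne_zero)).2 hs]
    simp
  have hm : z - 1 ≠ 0 := sub_ne_zero.2 hz1
  have hp : z + 1 ≠ 0 := fun h => hz2 (eq_neg_of_add_eq_zero_left h)
  have hx : -((z + 1) / (z - 1)) ^ 2 ≠ 0 := neg_ne_zero.2 (pow_ne_zero 2 (div_ne_zero hp hm))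
  have hB1 : (D * A₄)⁻¹ * A₄ = D⁻¹ := by
    rw [inv_mul_eq_iff_eq_mul, mul_right_comm, mul_inv_cancel, one_mul]
  have hB2 : (D ^ 2 * A₄ ^ 2)⁻¹ * (D * A₄ ^ 2) = D⁻¹ := by
    rw [inv_mul_eq_iff_eq_mul, mul_right_comm, sq D, mul_inv_cancel_right]
  unfold hyp2F1
  rw [hB1, hB2, MulChar.one_apply (pow_ne_zero 4 hz0).isUnit, MulChar.one_apply hx.isUnit,
    mul_left_comm]
  congr 1
  -- the common reciprocal argument of `D` on both sides, as a function of `s = w + w⁻¹`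
  let g : F → ℂ := fun s => (A₄ ^ 2) z * D⁻¹ ((1 + z ^ 2) ^ 2 - z ^ 2 * (s + 2))
  have hD : ∀ y : F, D y = D⁻¹ y⁻¹ := fun y => by rw [MulChar.inv_apply', inv_inv]
  have hLHS : ∑ w : F, A₄ w * g (w + w⁻¹) =
      ∑ y : F, (D * A₄) y * D⁻¹ (y - 1) * D⁻¹ (1 - z ^ 4 * y) := by
    -- substitute `y = w / z ^ 2`
    refine Fintype.sum_equiv (Equiv.mulRight₀ ((z ^ 2)⁻¹) (inv_ne_zero (pow_ne_zero 2 hz0))) _ _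
      fun w => ?_
    rcases eq_or_ne w 0 with rfl | hw
    · simp [MulChar.map_zero]
    · simp only [Equiv.mulRight₀_apply, g, MulChar.mul_apply]
      have hA : A₄ (w * (z ^ 2)⁻¹) = A₄ w * (A₄ ^ 2) z := by
        rw [map_mul, ← sq_inv_apply A₄ hA₄ z, ← inv_pow, map_pow,
          MulChar.pow_apply' _ two_ne_zero]
      have e : (1 + z ^ 2) ^ 2 - z ^ 2 * (w + w⁻¹ + 2) =
          (w * (z ^ 2)⁻¹)⁻¹ * (w * (z ^ 2)⁻¹ - 1) * (1 - z ^ 4 * (w * (z ^ 2)⁻¹)) := by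
        field_simp
        ring
      rw [hA, hD, e, map_mul, map_mul]
      ring
  have hRHS : ∑ v : F, (A₄ ^ 2) v * g ((v + 2) ^ 2 - 2) =
      ∑ y : F, (D⁻¹ ^ 4) (z - 1) * ((D ^ 2 * A₄ ^ 2) y * D⁻¹ (y - 1) *
        D⁻¹ (1 - -((z + 1) / (z - 1)) ^ 2 * y)) := by
    -- substitute `y = (z - 1) ^ 2 / (z * v)`
    refine Fintype.sum_equiv ((Equiv.inv F).trans (Equiv.mulRight₀ ((z - 1) ^ 2 * z⁻¹)
      (mul_ne_zero (pow_ne_zero 2 hm) (inv_ne_zero hz0)))) _ _ fun v => ?_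
    rcases eq_or_ne v 0 with rfl | hv
    · simp [MulChar.map_zero]
    · simp only [Equiv.trans_apply, Equiv.inv_apply, Equiv.mulRight₀_apply, g, MulChar.mul_apply]
      have hA : (A₄ ^ 2) (v⁻¹ * ((z - 1) ^ 2 * z⁻¹)) = (A₄ ^ 2) v * (A₄ ^ 2) z := by
        rw [map_mul, map_mul, sq_sq_apply A₄ hA₄ hm, sq_inv_apply A₄ hA₄, sq_inv_apply A₄ hA₄,
          one_mul]
      have e : (1 + z ^ 2) ^ 2 - z ^ 2 * ((v + 2) ^ 2 - 2 + 2) =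
          (z - 1) ^ 4 * ((v⁻¹ * ((z - 1) ^ 2 * z⁻¹))⁻¹ ^ 2 * (v⁻¹ * ((z - 1) ^ 2 * z⁻¹) - 1) *
            (1 - -((z + 1) / (z - 1)) ^ 2 * (v⁻¹ * ((z - 1) ^ 2 * z⁻¹)))) := by
        field_simp
        ring
      rw [hA, e, MulChar.pow_apply' D two_ne_zero, hD (v⁻¹ * ((z - 1) ^ 2 * z⁻¹)),
        MulChar.pow_apply' D⁻¹ four_ne_zero, map_mul, map_mul, map_mul, map_pow, map_pow]
      ring
  rw [← hLHS, Finset.mul_sum, ← hRHS]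
  exact sum_quartic hF A₄ hA₄ hneg g
end

section
/- Let λ₁ be a multiplicative character of F_q and set χ₁ = λ₁²φ. If χ₁ is not a fourth power (i.e., there is no multiplicative character ν₁ with χ₁ = ν₁⁴), then H(λ₁) = 0. -/
/-!
Write `χ = λ₁² φ`. For fixed `j ≠ 0, ±1`, the substitution `s = x (j + 1) / (j - 1)` turns the
condition on `x` into `s² = -a`, and `x - a / x = 2 s (j⁴ - 1) / (j² - 1)²`. So the sum over `x`
is `φ(j⁴ - 1) ∑_{s² = -a} φ(2 s)`, which also holds, as `0 = 0`, when `j = ±1`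
(`inner_sum_eq`). Hence `H(λ₁)` is a constant times `∑_j χ(j) φ(j⁴ - 1)`. Replacing `j` by `u j`
with `u` of order four multiplies this sum by `χ(u)`, so it vanishes unless `χ(u) = 1`. Since the
unit group is cyclic, a character trivial on `u` is a fourth power (`exists_fourth_root`), which is
excluded by hypothesis.
-/


open Finset

/-- A character that is trivial on `g ^ ((q - 1) / 4)`, for `g` a generator of the unit group, is a
fourth power: its fourth root sends `g` to a complex fourth root of `χ g`. -/
lemma exists_fourth_root {F : Type} [Field F] [Fintype F] [DecidableEq F]
    {g : Fˣ} (hg : ∀ x, x ∈ Subgroup.zpowers g) {m : ℕ} (hm : Fintype.card Fˣ = m * 4)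
    (χ : MulChar F ℂ) (hχ : χ ((g ^ m : Fˣ) : F) = 1) :
    ∃ ν : MulChar F ℂ, χ = ν ^ 4 := by
  obtain ⟨w, hw⟩ := IsAlgClosed.exists_pow_nat_eq (χ (g : F)) (n := 4) (by norm_num)
  have hgm : (χ (g : F)) ^ m = 1 := by
    rw [← map_pow, ← Units.val_pow_eq_pow_val]; exact hχ
  have hwc : w ^ Fintype.card Fˣ = 1 := by
    rw [hm, mul_comm, pow_mul, hw, hgm]
  have hw0 : w ≠ 0 := by
    rintro rfl
    rw [zero_pow Fintype.card_ne_zero] at hwc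
    exact zero_ne_one hwc
  have hmem : Units.mk0 w hw0 ∈ rootsOfUnity (Fintype.card Fˣ) ℂ := by
    rw [mem_rootsOfUnity]
    ext
    simpa using hwc
  refine ⟨MulChar.ofRootOfUnity hmem hg, ?_⟩
  rw [MulChar.eq_iff hg, MulChar.pow_apply_coe, MulChar.ofRootOfUnity_spec, Units.val_mk0, hw]

/-- The sum over `x` for a fixed `j`, evaluated by `s = x (j + 1) / (j - 1)`; both sides are `0`
when `j = ±1`. -/
lemma inner_sum_eq {F : Type} [Field F] [Fintype F] [DecidableEq F] (h2 : (2 : F) ≠ 0)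
    (φ : MulChar F ℂ) (hφ : φ ^ 2 = 1) {a : F} (ha : a ≠ 0) (j : F) :
    ∑ x ∈ univ.filter (fun x : F => x ≠ 0 ∧ x * (j + 1) ^ 2 + a * (j - 1) ^ 2 / x = 0),
        φ (x - a / x) =
      φ (j ^ 4 - 1) * ∑ s ∈ univ.filter (fun s : F => s ^ 2 = -a), φ (2 * s) := by
  by_cases h1 : j = 1
  · subst h1
    rw [Finset.filter_false_of_mem]
    · simp [MulChar.map_zero]
    · rintro x - ⟨hx, h⟩
      rw [sub_self, one_add_one_eq_two] at h
      simp [hx, h2] at h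
  by_cases h1' : j = -1
  · subst h1'
    rw [Finset.filter_false_of_mem]
    · have : ((-1 : F)) ^ 4 - 1 = 0 := by ring
      simp [this, MulChar.map_zero]
    · rintro x - ⟨hx, h⟩
      have : (-1 - 1 : F) ^ 2 = 2 ^ 2 := by ring
      rw [this] at h
      simp [hx, h2, ha] at h
  have hm : j - 1 ≠ 0 := sub_ne_zero.mpr h1
  have hp : j + 1 ≠ 0 := fun h => h1' (eq_neg_of_add_eq_zero_left h)
  rw [Finset.mul_sum]
  refine Finset.sum_bij' (fun x _ => x * (j + 1) / (j - 1)) (fun s _ => s * (j - 1) / (j + 1))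
    ?_ ?_ ?_ ?_ ?_
  · intro x hx
    simp only [Finset.mem_filter, Finset.mem_univ, true_and] at hx ⊢
    obtain ⟨hx0, hx⟩ := hx
    field_simp at hx ⊢
    linear_combination hx
  · intro s hs
    simp only [Finset.mem_filter, Finset.mem_univ, true_and] at hs ⊢
    have hs0 : s ≠ 0 := by
      rintro rfl
      apply ha
      linear_combination hs
    refine ⟨div_ne_zero (mul_ne_zero hs0 hm) hp, ?_⟩
    field_simp
    linear_combination (j ^ 2 - 1) * hs
  · intro x _
    field_simp
  · intro s _
    field_simp
  · intro x hx
    simp only [Finset.mem_filter, Finset.mem_univ, true_and] at hx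
    obtain ⟨hx0, hx⟩ := hx
    have hd : j ^ 2 - 1 ≠ 0 := by
      have : j ^ 2 - 1 = (j - 1) * (j + 1) := by ring
      rw [this]
      exact mul_ne_zero hm hp
    -- the unwanted factor is a square, on which `φ` is trivial
    have hsq : φ ((j ^ 2 - 1) ^ 2) = 1 := by
      rw [map_pow, ← MulChar.pow_apply' _ two_ne_zero, hφ, MulChar.one_apply hd.isUnit]
    rw [← one_mul (φ (x - a / x)), ← hsq, ← map_mul, ← map_mul]
    congr 1
    field_simp at hx ⊢
    have hx' : a * (j - 1) ^ 2 = - (x ^ 2 * (j + 1) ^ 2) := by linear_combination hx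
    linear_combination (-(j - 1) * (j + 1) ^ 2) * hx'

/-- If `χ₁ = λ₁²φ` is not a fourth power, then `H(λ₁) = 0`. -/
theorem H_eq_zero_of_not_fourth_power
    (F : Type) [Field F] [Fintype F] [DecidableEq F]
    (hq : Fintype.card F % 4 = 1)
    (A₄ : MulChar F ℂ) (hA₄ : orderOf A₄ = 4)
    (a : F) (ha : a ≠ 0)
    (lam : MulChar F ℂ)
    (hχ : ∀ ν : MulChar F ℂ, lam ^ 2 * A₄ ^ 2 ≠ ν ^ 4) :
    Hkatz A₄ lam a = 0 := by
  have hodd : ringChar F ≠ 2 := by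
    intro h
    have := FiniteField.even_card_of_char_two h
    omega
  have h2 : (2 : F) ≠ 0 := Ring.two_ne_zero hodd
  have hφ : (A₄ ^ 2) ^ 2 = 1 := by
    rw [← pow_mul, show 2 * 2 = orderOf A₄ from hA₄.symm, pow_orderOf_eq_one]
  obtain ⟨g, hg⟩ := IsCyclic.exists_generator (α := Fˣ)
  obtain ⟨m, hm⟩ : ∃ m, Fintype.card Fˣ = m * 4 := by
    rw [Fintype.card_units]
    exact ⟨(Fintype.card F - 1) / 4, by omega⟩
  set χ := lam ^ 2 * A₄ ^ 2 with hχdef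
  have hu4 : (((g ^ m : Fˣ) : F)) ^ 4 = 1 := by
    rw [← Units.val_pow_eq_pow_val, ← pow_mul, ← hm, pow_card_eq_one, Units.val_one]
  have hu : χ ((g ^ m : Fˣ) : F) ≠ 1 := by
    intro h
    obtain ⟨ν, hν⟩ := exists_fourth_root hg hm χ h
    exact hχ ν hν
  -- translating by `g ^ m`, which has order dividing four, rescales the sum by `χ (g ^ m) ≠ 1`
  have hzero : ∑ j : F, χ j * (A₄ ^ 2) (j ^ 4 - 1) = 0 := by
    have key : ∑ j : F, χ j * (A₄ ^ 2) (j ^ 4 - 1) =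
        χ ((g ^ m : Fˣ) : F) * ∑ j : F, χ j * (A₄ ^ 2) (j ^ 4 - 1) := by
      rw [Finset.mul_sum, ← Equiv.sum_comp (g ^ m).mulLeft]
      refine Finset.sum_congr rfl fun j _ => ?_
      rw [Units.mulLeft_apply, map_mul, mul_pow, hu4, one_mul, mul_assoc]
    by_contra hne
    exact hu (mul_right_cancel₀ hne (by rw [one_mul]; exact key.symm))
  have hH : Hkatz A₄ lam a = ∑ j : F, χ j *
      ∑ x ∈ univ.filter (fun x : F => x ≠ 0 ∧ x * (j + 1) ^ 2 + a * (j - 1) ^ 2 / x = 0),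
        (A₄ ^ 2) (x - a / x) := by
    rw [Hkatz, Finset.sum_filter, Finset.sum_product]
    refine Finset.sum_congr rfl fun j _ => ?_
    rw [Finset.mul_sum, Finset.sum_filter]
    refine Finset.sum_congr rfl fun x _ => ?_
    by_cases hj : j = 0
    · simp [hj, MulChar.map_zero]
    · simp [hj, hχdef]
  rw [hH]
  simp_rw [inner_sum_eq h2 _ hφ ha, ← mul_assoc]
  rw [← Finset.sum_mul, hzero, zero_mul]
end

section
/- Let λ₁, λ₂, μ be multiplicative characters of F_q with λ₁λ₂φ = μ², and set χ₁ = λ₁²φ, χ₂ = λ₂²φ. If μ⁴ is nontrivial and χ₁ is not a fourth power (i.e., there is no multiplicative character ν with χ₁ = ν⁴), then T(χ₁,χ₂) = 0. -/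
/-!
The sum `T(χ₁, χ₂)` vanishes because `P(ij, k) = P(j, k)` for all nonzero `j, k`, where
`i² = -1`, while `χ₁(i) = -1`: replacing `j` by `ij` gives `T = -T`.

*The value `χ₁(i)`.* With `κ = λ₁A₄` one has `χ₁ = κ²`, so `χ₁(i) = κ(-1) = ±1`. If
`κ(-1) = 1`, then `κ` is a square (`exists_sq_of_apply_neg_one_eq_one`) and `χ₁` is a fourth power.

*The symmetry of `P`* (`Pkatz_mul_i`). In the coordinates `u = x + a/x`, `v = x - a/x` the sum
over `x` in `P(j, k)` is the sum of `φ(v) ψ((j² + k²)u + 2jkv)` over the conic `u² - v² = 4a`.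
Suppose `j⁴ ≠ k⁴`. The terms for which the argument of `ψ` is a given `l` contribute `ψ(l)` times the
sum of `φ` over the roots of an explicit quadratic `X² + BX + C` (`fiber_sum_eq_rootSum`). The
substitution `j ↦ ij` turns this quadratic, up to rescaling `X` by the square `-2i = (1 - i)²`, into
`X² + 2BX + (B² - 4C)`, and these two quadratics always have the same sum of `φ` over their roots
(`rootSum_dual`). When `j⁴ = k⁴`, everything reduces to `j = k`, where the two sums over `x`
differ by the Gauss sum of `φ`, in agreement with the `δ`-terms of `P` (`mixedSum_mul_i_self`).
-/

open Finset

/-! ### Values of the quadratic character -/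

section QuadraticCharacter

variable {F : Type} [Field F] {φ : MulChar F ℂ}

lemma phi_mul_self (h2 : φ ^ 2 = 1) {y : F} (hy : y ≠ 0) : φ (y * y) = 1 := by
  rw [map_mul, ← sq, ← MulChar.pow_apply' φ two_ne_zero, h2, MulChar.one_apply hy.isUnit]

lemma phi_sq_mul (h2 : φ ^ 2 = 1) {s : F} (hs : s ≠ 0) (v : F) : φ (s ^ 2 * v) = φ v := by
  rw [map_mul, sq, phi_mul_self h2 hs, one_mul]

lemma phi_eq_of_mul_eq_sq (h2 : φ ^ 2 = 1) {v w s : F} (hs : s ≠ 0) (h : v * w = s ^ 2) :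
    φ v = φ w := by
  have hv : v ≠ 0 := by
    rintro rfl
    exact pow_ne_zero 2 hs (by rw [← h, zero_mul])
  rw [← phi_sq_mul h2 hs v, ← h, show v * w * v = v ^ 2 * w by ring, phi_sq_mul h2 hv]

lemma phi_neg (h2 : φ ^ 2 = 1) {i : F} (hi : i ^ 2 = -1) (v : F) : φ (-v) = φ v := by
  have hi0 : i ≠ 0 := by
    rintro rfl
    simp at hi
  rw [← phi_sq_mul h2 hi0 v, hi, neg_one_mul]

/-- Since the nonsquares of a finite field form a single coset of the nonzero squares, a
nontrivial `φ` with `φ² = 1` takes the value `-1` at every nonsquare. -/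
lemma phi_nonsquare [Fintype F] [DecidableEq F] (h2 : φ ^ 2 = 1) (h1 : φ ≠ 1) {y : F}
    (hy : ¬ IsSquare y) : φ y = -1 := by
  have hy0 : y ≠ 0 := by
    rintro rfl
    exact hy IsSquare.zero
  have hsq : φ y ^ 2 = 1 := by
    rw [sq, ← map_mul, phi_mul_self h2 hy0]
  refine (by simpa using hsq : φ y = 1 ∨ φ y = -1).resolve_left fun hφy => h1 ?_
  rw [MulChar.eq_one_iff]
  intro u
  by_cases hu : IsSquare (u : F)
  · obtain ⟨r, hr⟩ := hu
    have hr0 : r ≠ 0 := by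
      rintro rfl
      exact u.ne_zero (hr.trans (mul_zero 0))
    rw [hr, phi_mul_self h2 hr0]
  · have hyu : IsSquare (y * u) := by
      rw [← quadraticChar_one_iff_isSquare (mul_ne_zero hy0 u.ne_zero), map_mul,
        quadraticChar_neg_one_iff_not_isSquare.2 hy, quadraticChar_neg_one_iff_not_isSquare.2 hu]
      norm_num
    obtain ⟨r, hr⟩ := hyu
    have hr0 : r ≠ 0 := by
      rintro rfl
      exact mul_ne_zero hy0 u.ne_zero (by simpa using hr)
    have := phi_mul_self h2 hr0
    rwa [← hr, map_mul, hφy, one_mul] at this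

end QuadraticCharacter

/-! ### Sums of the quadratic character over the roots of a quadratic -/

section RootSums

variable {F : Type} [Field F] [Fintype F] [DecidableEq F] {φ : MulChar F ℂ}

/-- The sum of `φ` over the distinct roots in `F` of the quadratic `v² + Bv + C`. -/
noncomputable def rootSum (φ : MulChar F ℂ) (B C : F) : ℂ :=
  ∑ v ∈ univ.filter (fun v : F => v ^ 2 + B * v + C = 0), φ v

lemma rootSum_split (r s : F) :
    rootSum φ (-(r + s)) (r * s) = if r = s then φ r else φ r + φ s := by
  have h : univ.filter (fun v : F => v ^ 2 + -(r + s) * v + r * s = 0) = {r, s} := by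
    ext v
    simp only [mem_filter, mem_univ, true_and, mem_insert, mem_singleton]
    rw [show v ^ 2 + -(r + s) * v + r * s = (v - r) * (v - s) by ring, mul_eq_zero,
      sub_eq_zero, sub_eq_zero]
  rw [rootSum, h]
  split_ifs with hrs
  · simp [hrs]
  · exact sum_pair hrs

lemma rootSum_of_not_isSquare_disc {B C : F} (h : ¬ IsSquare (B ^ 2 - 4 * C)) :
    rootSum φ B C = 0 := by
  refine sum_eq_zero fun v hv => absurd ⟨2 * v + B, ?_⟩ h
  linear_combination (-4) * (mem_filter.1 hv).2

/-- If the constant term is a nonsquare, the involution exchanging the two roots changes the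
sign of `φ`. -/
lemma rootSum_of_not_isSquare_const (h2 : φ ^ 2 = 1) (h1 : φ ≠ 1) {B C : F}
    (h : ¬ IsSquare C) : rootSum φ B C = 0 := by
  refine sum_involution (fun v _ => -B - v) ?_ ?_ ?_ ?_
  · intro v hv
    have hprod : v * (-B - v) = C := by linear_combination -(mem_filter.1 hv).2
    have hneg := phi_nonsquare h2 h1 h
    have hv0 : v ≠ 0 := by
      rintro rfl
      exact h (by rw [← hprod, zero_mul]; exact IsSquare.zero)
    have hvv := phi_mul_self h2 hv0
    rw [← hprod, map_mul] at hneg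
    rw [map_mul] at hvv
    linear_combination φ v * hneg - φ (-B - v) * hvv
  · intro v hv _ hfix
    refine h ⟨v, ?_⟩
    linear_combination (mem_filter.1 hv).2 + v * hfix
  · intro v hv
    simp only [mem_filter, mem_univ, true_and] at hv ⊢
    linear_combination hv
  · intro v _
    exact sub_sub_cancel _ _

lemma rootSum_scale {s : F} (hs : s ≠ 0) (B C : F) :
    rootSum φ (s * B) (s ^ 2 * C) = φ s * rootSum φ B C := by
  rw [rootSum, rootSum, mul_sum]
  symm
  refine sum_bij' (fun v _ => s * v) (fun w _ => s⁻¹ * w) ?_ ?_ ?_ ?_ ?_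
  · intro v hv
    simp only [mem_filter, mem_univ, true_and] at hv ⊢
    linear_combination s ^ 2 * hv
  · intro w hw
    simp only [mem_filter, mem_univ, true_and] at hw ⊢
    field_simp
    linear_combination hw
  · intro v _
    field_simp
  · intro w _
    field_simp
  · intro v _
    rw [map_mul]

/-- The duality `(B, C) ↦ (2B, B² - 4C)`, familiar from the `2`-isogeny of the elliptic curve
`y² = x(x² + Bx + C)`, preserves the sum of `φ` over the roots. When `C = d²` and `v₁, v₂`
are the roots of the first quadratic, those of the second are `w = v₁ + v₂ ± 2d`, and
`v₁ * w = (v₁ ± d)²` is a square. -/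
lemma rootSum_dual (h2 : φ ^ 2 = 1) (h1 : φ ≠ 1) (hF : (2 : F) ≠ 0) (B C : F) :
    rootSum φ (2 * B) (B ^ 2 - 4 * C) = rootSum φ B C := by
  have h4 : (4 : F) ≠ 0 := by
    rw [show (4 : F) = 2 * 2 by norm_num]
    exact mul_ne_zero hF hF
  by_cases hD : IsSquare (B ^ 2 - 4 * C)
  swap
  · rw [rootSum_of_not_isSquare_disc hD, rootSum_of_not_isSquare_const h2 h1 hD]
  by_cases hC : IsSquare C
  swap
  · rw [rootSum_of_not_isSquare_const h2 h1 hC, rootSum_of_not_isSquare_disc]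
    rintro ⟨r, hr⟩
    refine hC ⟨r / 4, ?_⟩
    field_simp
    linear_combination hr
  obtain ⟨e, he⟩ := hD
  obtain ⟨d, rfl⟩ := hC
  obtain ⟨r, hr⟩ : ∃ r, 2 * r = -B + e := ⟨(-B + e) / 2, by field_simp⟩
  obtain ⟨s, hs⟩ : ∃ s, 2 * s = -B - e := ⟨(-B - e) / 2, by field_simp⟩
  have hB : B = -(r + s) := by
    apply mul_left_cancel₀ hF
    linear_combination hr + hs
  have hrs : d * d = r * s := by
    apply mul_left_cancel₀ h4
    linear_combination -he - 2 * s * hr - (-B + e) * hs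
  have hdual : rootSum φ (2 * B) (B ^ 2 - 4 * (d * d)) =
      rootSum φ (-((r + s + 2 * d) + (r + s - 2 * d))) ((r + s + 2 * d) * (r + s - 2 * d)) := by
    congr 1
    · rw [hB]; ring
    · rw [hB]; ring
  rw [hdual, rootSum_split, hrs, hB, rootSum_split]
  have hw : r + s + 2 * d = r + s - 2 * d ↔ d = 0 := by
    constructor
    · intro h
      apply mul_left_cancel₀ h4
      linear_combination h
    · rintro rfl
      ring
  simp only [hw]
  by_cases hd : d = 0
  · subst hd
    rcases mul_eq_zero.1 (hrs.symm.trans (mul_zero 0)) with h | h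
    · subst h
      by_cases h' : (0 : F) = s
      · simp [← h']
      · simp [h', MulChar.map_zero]
    · subst h
      by_cases h' : r = (0 : F) <;> simp [h', MulChar.map_zero]
  · rw [if_neg hd]
    split_ifs with h
    · subst h
      have hr0 : r ≠ 0 := by
        rintro rfl
        exact mul_self_ne_zero.2 hd (by simpa using hrs)
      have h4r : φ (r + r + 2 * r) = φ r := by
        rw [show r + r + 2 * r = 2 ^ 2 * r by ring, phi_sq_mul h2 hF]
      rcases mul_self_eq_mul_self_iff.1 hrs with rfl | rfl
      · rw [h4r, show d + d - 2 * d = 0 by ring, MulChar.map_zero, add_zero]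
      · rw [show r + r - 2 * -r = r + r + 2 * r by ring, h4r,
          show r + r + 2 * -r = 0 by ring, MulChar.map_zero, zero_add]
    · have hrd : r + d ≠ 0 := by
        intro h0
        apply h
        have : d * (d + s) = 0 := by linear_combination hrs + s * h0
        have hds : d + s = 0 := (mul_eq_zero.1 this).resolve_left hd
        linear_combination h0 - hds
      have hsd : s - d ≠ 0 := by
        intro h0
        apply h
        have : d * (d - r) = 0 := by linear_combination hrs + r * h0
        have hds : d - r = 0 := (mul_eq_zero.1 this).resolve_left hd
        linear_combination -hds - h0
      rw [phi_eq_of_mul_eq_sq h2 hrd (v := r) (w := r + s + 2 * d)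
          (by linear_combination -hrs),
        phi_eq_of_mul_eq_sq h2 hsd (v := s) (w := r + s - 2 * d)
          (by linear_combination -hrs)]

end RootSums

/-! ### The sum over x and its behaviour under j ↦ ij -/

section Symmetry

variable {F : Type} [Field F] [Fintype F] [DecidableEq F] {φ : MulChar F ℂ}

/-- The mixed character sum inside `Pkatz`. -/
noncomputable def mixedSum (ψ : AddChar F ℂ) (φ : MulChar F ℂ) (a j k : F) : ℂ :=
  ∑ x ∈ univ.filter (fun x : F => x ≠ 0),
    φ (a / x - x) * ψ (x * (j + k) ^ 2 + (a / x) * (j - k) ^ 2)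

/-- Replacing `x` by `a / x`. -/
lemma mixedSum_neg_left (ψ : AddChar F ℂ) (h2 : φ ^ 2 = 1) {i : F} (hi : i ^ 2 = -1)
    {a : F} (ha : a ≠ 0) (j k : F) : mixedSum ψ φ a (-j) k = mixedSum ψ φ a j k := by
  refine sum_bij' (fun x _ => a / x) (fun x _ => a / x) ?_ ?_ ?_ ?_ ?_
  · intro x hx
    simp only [mem_filter, mem_univ, true_and] at hx ⊢
    exact div_ne_zero ha hx
  · intro x hx
    simp only [mem_filter, mem_univ, true_and] at hx ⊢
    exact div_ne_zero ha hx
  · intro x _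
    exact div_div_cancel₀ ha
  · intro x _
    exact div_div_cancel₀ ha
  · intro x _
    simp only [div_div_cancel₀ ha]
    rw [← phi_neg h2 hi (a / x - x), neg_sub]
    congr 2
    ring

/-- The part of `mixedSum` where the argument of `ψ` equals `l`. In the coordinates
`u = x + a/x`, `v = x - a/x` it runs over the intersection of the conic `u² - v² = 4a` with the
line `(j² + k²)u + 2jkv = l`; eliminating `u` leaves a quadratic equation for
`(j² - k²)²v`. -/
lemma fiber_sum_eq_rootSum (h2 : φ ^ 2 = 1) (hF : (2 : F) ≠ 0) {i : F} (hi : i ^ 2 = -1)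
    {a : F} (ha : a ≠ 0) {j k : F} (hA : j ^ 2 - k ^ 2 ≠ 0) (hA' : j ^ 2 + k ^ 2 ≠ 0) (l : F) :
    ∑ x ∈ univ.filter (fun x : F => x ≠ 0 ∧ x * (j + k) ^ 2 + (a / x) * (j - k) ^ 2 = l),
      φ (a / x - x) =
    rootSum φ (4 * (j * k) * l)
      (-((j ^ 2 - k ^ 2) ^ 2 * (l ^ 2 - 4 * a * (j ^ 2 + k ^ 2) ^ 2))) := by
  -- a root `w` of the quadratic determines `v`, then `u`, and `x = (u + v) / 2`
  let v : F → F := fun w => w / (j ^ 2 - k ^ 2) ^ 2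
  let u : F → F := fun w => (l - 2 * (j * k) * v w) / (j ^ 2 + k ^ 2)
  have hv : ∀ w, (j ^ 2 - k ^ 2) ^ 2 * v w = w := fun w => by
    simp only [v]; field_simp
  have hu : ∀ w, (j ^ 2 + k ^ 2) * u w = l - 2 * (j * k) * v w := fun w => by
    simp only [u]; field_simp
  have hconic : ∀ w, w ^ 2 + 4 * (j * k) * l * w +
      -((j ^ 2 - k ^ 2) ^ 2 * (l ^ 2 - 4 * a * (j ^ 2 + k ^ 2) ^ 2)) = 0 →
      (u w + v w) / 2 * ((u w - v w) / 2) = a := by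
    intro w hw
    have h : (j ^ 2 + k ^ 2) ^ 2 * (j ^ 2 - k ^ 2) ^ 2 * (u w ^ 2 - v w ^ 2 - 4 * a) = 0 := by
      rw [← hv w] at hw
      have := hu w
      linear_combination -hw +
        (j ^ 2 - k ^ 2) ^ 2 * ((j ^ 2 + k ^ 2) * u w + l - 2 * (j * k) * v w) * this
    have h' := (mul_eq_zero.1 h).resolve_left
      (mul_ne_zero (pow_ne_zero 2 hA') (pow_ne_zero 2 hA))
    field_simp
    linear_combination h'
  have hdiv : ∀ w, w ^ 2 + 4 * (j * k) * l * w +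
      -((j ^ 2 - k ^ 2) ^ 2 * (l ^ 2 - 4 * a * (j ^ 2 + k ^ 2) ^ 2)) = 0 →
      (u w + v w) / 2 ≠ 0 ∧ a / ((u w + v w) / 2) = (u w - v w) / 2 := by
    intro w hw
    have hc := hconic w hw
    have h0 : (u w + v w) / 2 ≠ 0 := by
      intro h0
      rw [h0, zero_mul] at hc
      exact ha hc.symm
    exact ⟨h0, by rw [div_eq_iff h0, mul_comm, hc]⟩
  refine sum_bij' (fun x _ => (j ^ 2 - k ^ 2) ^ 2 * (x - a / x)) (fun w _ => (u w + v w) / 2)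
    ?_ ?_ ?_ ?_ ?_
  · intro x hx
    simp only [mem_filter, mem_univ, true_and] at hx ⊢
    obtain ⟨hx0, hx⟩ := hx
    rw [← hx]
    field_simp
    ring
  · intro w hw
    simp only [mem_filter, mem_univ, true_and] at hw ⊢
    obtain ⟨h0, hd⟩ := hdiv w hw
    refine ⟨h0, ?_⟩
    rw [hd]
    field_simp
    linear_combination 2 * hu w
  · intro x hx
    simp only [mem_filter, mem_univ, true_and] at hx
    obtain ⟨hx0, hx⟩ := hx
    have hv' : v ((j ^ 2 - k ^ 2) ^ 2 * (x - a / x)) = x - a / x := by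
      simp only [v]; field_simp
    have hu' : u ((j ^ 2 - k ^ 2) ^ 2 * (x - a / x)) = x + a / x := by
      apply mul_left_cancel₀ hA'
      rw [hu, hv', ← hx]
      ring
    simp only [hv', hu']
    field_simp
    ring
  · intro w hw
    simp only [mem_filter, mem_univ, true_and] at hw
    obtain ⟨h0, hd⟩ := hdiv w hw
    simp only [hd]
    rw [← sub_div, show u w + v w - (u w - v w) = 2 * v w by ring, mul_div_cancel_left₀ _ hF, hv]
  · intro x _
    rw [phi_sq_mul h2 hA, ← phi_neg h2 hi, neg_sub]

lemma mixedSum_eq_sum_fibers (ψ : AddChar F ℂ) (a j k : F) :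
    mixedSum ψ φ a j k = ∑ l : F, ψ l *
      ∑ x ∈ univ.filter (fun x : F => x ≠ 0 ∧ x * (j + k) ^ 2 + (a / x) * (j - k) ^ 2 = l),
        φ (a / x - x) := by
  rw [mixedSum, ← sum_fiberwise _ (fun x => x * (j + k) ^ 2 + (a / x) * (j - k) ^ 2)]
  refine sum_congr rfl fun l _ => ?_
  rw [mul_sum, filter_filter]
  refine sum_congr rfl fun x hx => ?_
  rw [(mem_filter.1 hx).2.2, mul_comm]

/-- Multiplying `j` by `i` exchanges `j² + k²` and `k² - j²`, and the quadratic of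
`fiber_sum_eq_rootSum` becomes, after rescaling by `-2i = (1 - i)²`, its dual. -/
lemma mixedSum_mul_i (ψ : AddChar F ℂ) (h2 : φ ^ 2 = 1) (h1 : φ ≠ 1) (hF : (2 : F) ≠ 0)
    {i : F} (hi : i ^ 2 = -1) {a : F} (ha : a ≠ 0) {j k : F}
    (hA : j ^ 2 - k ^ 2 ≠ 0) (hA' : j ^ 2 + k ^ 2 ≠ 0) :
    mixedSum ψ φ a (i * j) k = mixedSum ψ φ a j k := by
  have hB : (i * j) ^ 2 - k ^ 2 ≠ 0 := by
    rw [mul_pow, hi]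
    intro h
    exact hA' (by linear_combination -h)
  have hB' : (i * j) ^ 2 + k ^ 2 ≠ 0 := by
    rw [mul_pow, hi]
    intro h
    exact hA (by linear_combination -h)
  have h1i : (1 - i) ≠ 0 := by
    intro h
    apply hF
    linear_combination (1 + i) * h + hi
  have hs : -2 * i = (1 - i) ^ 2 * 1 := by linear_combination -hi
  have hφs : φ (-2 * i) = 1 := by rw [hs, phi_sq_mul h2 h1i, map_one]
  have hs0 : -2 * i ≠ 0 := by
    rw [hs, mul_one]
    exact pow_ne_zero 2 h1i
  rw [mixedSum_eq_sum_fibers, mixedSum_eq_sum_fibers]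
  refine sum_congr rfl fun l _ => ?_
  rw [fiber_sum_eq_rootSum h2 hF hi ha hB hB', fiber_sum_eq_rootSum h2 hF hi ha hA hA',
    ← rootSum_dual h2 h1 hF (4 * (j * k) * l), ← one_mul (rootSum φ (4 * (i * j * k) * l) _),
    ← hφs, ← rootSum_scale hs0]
  congr 2
  · linear_combination (-8 * j * k * l) * hi
  · simp only [mul_pow, hi]
    ring

/-- The number of `x ≠ 0` with `x - a/x = v` is `1 + φ(v² + 4a)`. -/
lemma card_sub_div_eq (h2 : φ ^ 2 = 1) (h1 : φ ≠ 1) (hF : (2 : F) ≠ 0) {a : F} (ha : a ≠ 0)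
    (v : F) :
    ((univ.filter (fun x : F => x ≠ 0 ∧ x - a / x = v)).card : ℂ) = 1 + φ (v ^ 2 + 4 * a) := by
  have hmem : ∀ x : F, (x ≠ 0 ∧ x - a / x = v) ↔ (2 * x - v) ^ 2 = v ^ 2 + 4 * a := by
    intro x
    have h4 : (4 : F) ≠ 0 := by
      rw [show (4 : F) = 2 * 2 by norm_num]
      exact mul_ne_zero hF hF
    constructor
    · rintro ⟨hx, rfl⟩
      field_simp
      ring
    · intro h
      have h' : x * (x - v) = a := by
        apply mul_left_cancel₀ h4
        linear_combination h
      have hx : x ≠ 0 := by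
        rintro rfl
        exact ha (by rw [← h', zero_mul])
      refine ⟨hx, ?_⟩
      rw [← h']
      field_simp
      ring
  simp only [hmem]
  by_cases hsq : IsSquare (v ^ 2 + 4 * a)
  · obtain ⟨r, hr⟩ := hsq
    have hset : univ.filter (fun x : F => (2 * x - v) ^ 2 = v ^ 2 + 4 * a) =
        {(v + r) / 2, (v - r) / 2} := by
      ext x
      simp only [mem_filter, mem_univ, true_and, mem_insert, mem_singleton]
      rw [hr, ← sq, sq_eq_sq_iff_eq_or_eq_neg, eq_div_iff hF, eq_div_iff hF]
      refine or_congr ⟨fun h => ?_, fun h => ?_⟩ ⟨fun h => ?_, fun h => ?_⟩ <;>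
        linear_combination h
    rw [hset, hr]
    by_cases hr0 : r = 0
    · simp [hr0, MulChar.map_zero]
    · rw [phi_mul_self h2 hr0, card_pair]
      · norm_num
      · intro h
        rw [div_left_inj' hF] at h
        apply hr0
        apply mul_left_cancel₀ hF
        linear_combination h
  · rw [phi_nonsquare h2 h1 hsq, filter_eq_empty_iff.2]
    · simp
    · intro x _ h
      exact hsq ⟨2 * x - v, by rw [← h, sq]⟩

/-- In the degenerate case `j = k`, the invariance under `j ↦ ij` fails by a Gauss sum, which is
the contribution of the `δ`-terms in `Pkatz`. -/
lemma mixedSum_mul_i_self (ψ : AddChar F ℂ) (h2 : φ ^ 2 = 1) (h1 : φ ≠ 1) (hF : (2 : F) ≠ 0)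
    {i : F} (hi : i ^ 2 = -1) {a : F} (ha : a ≠ 0) {k : F} (hk : k ≠ 0) :
    mixedSum ψ φ a (i * k) k = gaussSum φ ψ + mixedSum ψ φ a k k := by
  have h1i : (1 + i) ≠ 0 := by
    intro h
    apply hF
    linear_combination (1 - i) * h + hi
  have hφ : ∀ y, φ (2 * i * y) = φ y := fun y => by
    rw [show 2 * i * y = (1 + i) ^ 2 * y by linear_combination -y * hi, phi_sq_mul h2 h1i]
  have hi0 : i ≠ 0 := by
    rintro rfl
    simp at hi
  have hc : 2 * i * k ^ 2 ≠ 0 := mul_ne_zero (mul_ne_zero hF hi0) (pow_ne_zero 2 hk)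
  -- grouping the terms by the value of `v = x - a/x`
  have hfib : mixedSum ψ φ a (i * k) k =
      ∑ v : F, φ v * (1 + φ (v ^ 2 + 4 * a)) * ψ (2 * i * k ^ 2 * v) := by
    rw [mixedSum, ← sum_fiberwise _ (fun x => x - a / x)]
    refine sum_congr rfl fun v _ => ?_
    rw [← card_sub_div_eq h2 h1 hF ha, filter_filter, mul_comm (φ v), mul_assoc,
      ← nsmul_eq_mul, ← sum_const]
    refine sum_congr rfl fun x hx => ?_
    obtain ⟨hx0, hx⟩ := (mem_filter.1 hx).2
    rw [← hx, ← phi_neg h2 hi (a / x - x), neg_sub]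
    congr 2
    linear_combination (x + a / x) * k ^ 2 * hi
  have hgauss : ∑ v : F, φ v * ψ (2 * i * k ^ 2 * v) = gaussSum φ ψ := by
    have h := gaussSum_mulShift φ ψ (Units.mk0 _ hc)
    rw [Units.val_mk0, hφ, sq, phi_mul_self h2 hk, one_mul] at h
    rw [← h]
    simp only [gaussSum, AddChar.mulShift_apply, sq]
  -- the substitution `v = -2ix`
  have hrest : ∑ v : F, φ v * φ (v ^ 2 + 4 * a) * ψ (2 * i * k ^ 2 * v) =
      mixedSum ψ φ a k k := by
    have hb : Function.Bijective (fun x : F => (-(2 * i)) * x) :=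
      mulLeft_bijective₀ _ (neg_ne_zero.2 (mul_ne_zero hF hi0))
    rw [← hb.sum_comp, mixedSum, sum_filter]
    refine sum_congr rfl fun x _ => ?_
    split_ifs with hx
    · rw [← map_mul]
      congr 1
      · rw [← phi_sq_mul h2 hx (a / x - x), ← hφ (x ^ 2 * (a / x - x)),
          ← phi_neg h2 hi (2 * i * (x ^ 2 * (a / x - x))),
          ← phi_sq_mul h2 hF (-(2 * i * (x ^ 2 * (a / x - x))))]
        congr 1
        field_simp
        linear_combination (-4 * x ^ 2) * hi
      · congr 1
        linear_combination (-4 * k ^ 2 * x) * hi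
    · rw [not_not.1 hx, mul_zero, MulChar.map_zero, zero_mul, zero_mul]
  rw [hfib, ← hgauss, ← hrest, ← sum_add_distrib]
  refine sum_congr rfl fun v _ => ?_
  ring

end Symmetry

/-! ### Invariance of P and vanishing of T -/

section Invariance

variable {F : Type} [Field F] [Fintype F] [DecidableEq F]

lemma Pkatz_eq_mixedSum (ψ : AddChar F ℂ) {A₄ : MulChar F ℂ} (h2 : (A₄ ^ 2) ^ 2 = 1)
    {i : F} (hi : i ^ 2 = -1) (a j k : F) :
    Pkatz ψ A₄ a j k = (if j = k then 1 else 0) + (if j = -k then 1 else 0) +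
      (gaussSum (A₄ ^ 2) ψ)⁻¹ * mixedSum ψ (A₄ ^ 2) a j k := by
  rw [Pkatz, mixedSum, phi_neg h2 hi, map_one, one_mul]

lemma Pkatz_neg_left (ψ : AddChar F ℂ) {A₄ : MulChar F ℂ} (h2 : (A₄ ^ 2) ^ 2 = 1)
    {i : F} (hi : i ^ 2 = -1) {a : F} (ha : a ≠ 0) (j k : F) :
    Pkatz ψ A₄ a (-j) k = Pkatz ψ A₄ a j k := by
  rw [Pkatz_eq_mixedSum ψ h2 hi, Pkatz_eq_mixedSum ψ h2 hi, mixedSum_neg_left ψ h2 hi ha]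
  simp only [neg_eq_iff_eq_neg, neg_neg]
  ring

lemma Pkatz_mul_i_self {ψ : AddChar F ℂ} (hψ : ψ ≠ 1) {A₄ : MulChar F ℂ}
    (h2 : (A₄ ^ 2) ^ 2 = 1) (h1 : A₄ ^ 2 ≠ 1) (hF : (2 : F) ≠ 0) {i : F} (hi : i ^ 2 = -1)
    {a : F} (ha : a ≠ 0) {k : F} (hk : k ≠ 0) :
    Pkatz ψ A₄ a (i * k) k = Pkatz ψ A₄ a k k := by
  have hG : gaussSum (A₄ ^ 2) ψ ≠ 0 :=
    gaussSum_ne_zero_of_nontrivial (Nat.cast_ne_zero.2 Fintype.card_ne_zero) h1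
      (AddChar.IsPrimitive.of_ne_one hψ)
  have hne : i * k ≠ k := by
    intro h
    rw [mul_eq_right₀ hk] at h
    apply hF
    rw [h] at hi
    linear_combination hi
  have hne' : i * k ≠ -k := by
    intro h
    have h' : i = -1 := mul_right_cancel₀ hk (by rw [h, neg_one_mul])
    apply hF
    rw [h'] at hi
    linear_combination hi
  have hkk : k ≠ -k := by
    intro h
    refine mul_ne_zero hF hk ?_
    linear_combination h
  rw [Pkatz_eq_mixedSum ψ h2 hi, Pkatz_eq_mixedSum ψ h2 hi,
    mixedSum_mul_i_self ψ h2 h1 hF hi ha hk, if_neg hne, if_neg hne', if_pos rfl, if_neg hkk,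
    mul_add, inv_mul_cancel₀ hG]
  ring

/-- The key symmetry: `P(ij, k) = P(j, k)` whenever `i² = -1`. -/
lemma Pkatz_mul_i {ψ : AddChar F ℂ} (hψ : ψ ≠ 1) {A₄ : MulChar F ℂ}
    (h2 : (A₄ ^ 2) ^ 2 = 1) (h1 : A₄ ^ 2 ≠ 1) (hF : (2 : F) ≠ 0) {i : F} (hi : i ^ 2 = -1)
    {a : F} (ha : a ≠ 0) {j k : F} (hj : j ≠ 0) (hk : k ≠ 0) :
    Pkatz ψ A₄ a (i * j) k = Pkatz ψ A₄ a j k := by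
  by_cases hA : j ^ 2 - k ^ 2 = 0
  · rcases sq_eq_sq_iff_eq_or_eq_neg.1 (sub_eq_zero.1 hA) with rfl | rfl
    · exact Pkatz_mul_i_self hψ h2 h1 hF hi ha hk
    · rw [mul_neg, Pkatz_neg_left ψ h2 hi ha, Pkatz_neg_left ψ h2 hi ha,
        Pkatz_mul_i_self hψ h2 h1 hF hi ha hk]
  by_cases hA' : j ^ 2 + k ^ 2 = 0
  · -- here `ij = ±k`, so that `j = ∓ik`
    have hsq : (i * j) ^ 2 = k ^ 2 := by
      rw [mul_pow, hi]
      linear_combination -hA'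
    have hj' : j = -(i * (i * j)) := by linear_combination j * hi
    rcases sq_eq_sq_iff_eq_or_eq_neg.1 hsq with h | h
    · rw [h] at hj'
      rw [h, hj', Pkatz_neg_left ψ h2 hi ha, Pkatz_mul_i_self hψ h2 h1 hF hi ha hk]
    · rw [h, mul_neg, neg_neg] at hj'
      rw [h, hj', Pkatz_neg_left ψ h2 hi ha, Pkatz_mul_i_self hψ h2 h1 hF hi ha hk]
  have hne : j ≠ k := by
    rintro rfl
    exact hA (sub_self _)
  have hne' : j ≠ -k := by
    rintro rfl
    exact hA (by ring)
  have hine : i * j ≠ k := by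
    rintro rfl
    exact hA' (by rw [mul_pow, hi]; ring)
  have hine' : i * j ≠ -k := by
    intro h
    apply hA'
    linear_combination j ^ 2 * hi - (i * j - k) * h
  rw [Pkatz_eq_mixedSum ψ h2 hi, Pkatz_eq_mixedSum ψ h2 hi,
    mixedSum_mul_i ψ h2 h1 hF hi ha hA hA', if_neg hne, if_neg hne', if_neg hine, if_neg hine']

/-- A character with `κ(-1) = 1` is a square: a square root of the value of `κ` at a generator
of `Fˣ` is again a root of unity of order dividing `|Fˣ|`. -/
lemma exists_sq_of_apply_neg_one_eq_one (hF : (2 : F) ≠ 0) {κ : MulChar F ℂ}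
    (hκ : κ (-1) = 1) : ∃ ν : MulChar F ℂ, κ = ν ^ 2 := by
  obtain ⟨g, hg⟩ := IsCyclic.exists_generator (α := Fˣ)
  have hneg : (-1 : Fˣ) ≠ 1 := by
    intro h
    have h' : (-1 : F) = 1 := by simpa using congrArg Units.val h
    apply hF
    linear_combination -h'
  obtain ⟨m, hm⟩ : 2 ∣ Fintype.card Fˣ := by
    rw [← orderOf_eq_prime (p := 2) (neg_one_sq : (-1 : Fˣ) ^ 2 = 1) hneg]
    exact orderOf_dvd_card
  have hord : orderOf g = 2 * m := by
    rw [orderOf_eq_card_of_forall_mem_zpowers hg, Nat.card_eq_fintype_card, hm]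
  have hm0 : 0 < m := by
    have := Fintype.card_pos (α := Fˣ)
    omega
  have hgm : (g : F) ^ m = -1 := by
    have hsq : ((g : F) ^ m) ^ 2 = 1 := by
      rw [← pow_mul, mul_comm, ← hord, ← Units.val_pow_eq_pow_val, pow_orderOf_eq_one,
        Units.val_one]
    refine (by simpa using hsq : (g : F) ^ m = 1 ∨ (g : F) ^ m = -1).resolve_left fun h => ?_
    have h' : g ^ m = 1 := Units.ext (by rw [Units.val_pow_eq_pow_val, h, Units.val_one])
    have := Nat.le_of_dvd hm0 (orderOf_dvd_of_pow_eq_one h')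
    omega
  obtain ⟨y, hy⟩ := IsAlgClosed.exists_pow_nat_eq (κ g) (n := 2) two_pos
  have hy1 : y ^ Fintype.card Fˣ = 1 := by
    rw [hm, pow_mul, hy, ← map_pow, hgm, hκ]
  have hy0 : y ≠ 0 := by
    rintro rfl
    rw [zero_pow Fintype.card_ne_zero] at hy1
    exact zero_ne_one hy1
  have hmem : Units.mk0 y hy0 ∈ rootsOfUnity (Fintype.card Fˣ) ℂ := by
    rw [mem_rootsOfUnity]
    exact Units.ext (by simpa using hy1)
  refine ⟨MulChar.ofRootOfUnity hmem hg, ?_⟩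
  rw [MulChar.eq_iff hg, MulChar.pow_apply_coe, MulChar.ofRootOfUnity_spec, Units.val_mk0, hy]

end Invariance

/-- If `μ⁴` is nontrivial and `χ₁` is not a fourth power, then `T(χ₁,χ₂) = 0`. -/
theorem T2_eq_zero_of_mu_pow_four_nontrivial
    (F : Type) [Field F] [Fintype F] [DecidableEq F]
    (hq : Fintype.card F % 4 = 1)
    (ψ : AddChar F ℂ) (hψ : ψ ≠ 1)
    (A₄ : MulChar F ℂ) (hA₄ : orderOf A₄ = 4)
    (a : F) (ha : a ≠ 0)
    (lam₁ lam₂ μ : MulChar F ℂ)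
    (hμ : lam₁ * lam₂ * A₄ ^ 2 = μ ^ 2)
    (hμ4 : μ ^ 4 ≠ 1)
    (hχ₁ : ∀ ν : MulChar F ℂ, lam₁ ^ 2 * A₄ ^ 2 ≠ ν ^ 4) :
    Tmel2 ψ A₄ a (lam₁ ^ 2 * A₄ ^ 2) (lam₂ ^ 2 * A₄ ^ 2) = 0 := by
  have h2 : (A₄ ^ 2) ^ 2 = 1 := by
    rw [← pow_mul, show 2 * 2 = orderOf A₄ from hA₄.symm, pow_orderOf_eq_one]
  have h1 : A₄ ^ 2 ≠ 1 := by
    intro h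
    have := orderOf_dvd_of_pow_eq_one h
    rw [hA₄] at this
    omega
  have hchar : ringChar F ≠ 2 := by
    intro h
    have := FiniteField.even_card_of_char_two h
    omega
  have hF : (2 : F) ≠ 0 := Ring.two_ne_zero hchar
  obtain ⟨i, hi'⟩ : IsSquare (-1 : F) := FiniteField.isSquare_neg_one_iff.2 (by omega)
  have hi : i ^ 2 = -1 := by rw [sq, hi']
  have hi0 : i ≠ 0 := by
    rintro rfl
    simp at hi
  -- `χ₁ = κ²` with `κ = λ₁A₄`, and `χ₁(i) = κ(-1)`
  have hκ : (lam₁ * A₄) (-1) ≠ 1 := by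
    intro h
    obtain ⟨ν, hν⟩ := exists_sq_of_apply_neg_one_eq_one hF h
    exact hχ₁ ν (by rw [← mul_pow, hν, ← pow_mul])
  have hκ' : (lam₁ * A₄) (-1) = -1 := by
    have hsq : (lam₁ * A₄) (-1) ^ 2 = 1 := by rw [← map_pow, neg_one_sq, map_one]
    exact (by simpa using hsq : (lam₁ * A₄) (-1) = 1 ∨ (lam₁ * A₄) (-1) = -1).resolve_left hκ
  have hχi : (lam₁ ^ 2 * A₄ ^ 2) i = -1 := by
    rw [← mul_pow, MulChar.pow_apply' _ two_ne_zero, ← map_pow, hi, hκ']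
  have hneg : Tmel2 ψ A₄ a (lam₁ ^ 2 * A₄ ^ 2) (lam₂ ^ 2 * A₄ ^ 2) =
      -Tmel2 ψ A₄ a (lam₁ ^ 2 * A₄ ^ 2) (lam₂ ^ 2 * A₄ ^ 2) := by
    rw [Tmel2, ← sum_neg_distrib]
    symm
    refine sum_bij' (fun j _ => i * j) (fun j _ => i⁻¹ * j) ?_ ?_ ?_ ?_ ?_
    · intro j hj
      simp only [mem_filter, mem_univ, true_and] at hj ⊢
      exact mul_ne_zero hi0 hj
    · intro j hj
      simp only [mem_filter, mem_univ, true_and] at hj ⊢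
      exact mul_ne_zero (inv_ne_zero hi0) hj
    · intro j _
      exact inv_mul_cancel_left₀ hi0 j
    · intro j _
      exact mul_inv_cancel_left₀ hi0 j
    · intro j hj
      rw [← sum_neg_distrib]
      refine sum_congr rfl fun k hk => ?_
      rw [Pkatz_mul_i hψ h2 h1 hF hi ha (mem_filter.1 hj).2 (mem_filter.1 hk).2,
        map_mul _ i j, hχi]
      ring
  exact self_eq_neg.1 hneg
end

section
/- If the multiplicative characters χ₁ and χ₂ of F_q are not both fourth powers (i.e., it is not the case that there exist multiplicative characters ν₁, ν₂ with χ₁ = ν₁⁴ and χ₂ = ν₂⁴), then T(χ₁,χ₂) = 0. -/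
/-!
Let `i² = -1` in `F` and write `φ = A₄²` for the quadratic character. A multiplicative character
`χ` is a fourth power exactly when `χ(i) = 1`. So it is enough that `P(ij,k) = P(j,k)` for nonzero
`j, k` (`Pkatz_mul_left`): since `P` is symmetric, substituting `j ↦ ij` or `k ↦ ik` in the double sum
gives `T = χ₁(i) T = χ₂(i) T`, and `T ≠ 0` would force both characters to be fourth powers.

For the invariance, put `G = G(φ)`, expand `G φ(w) = ∑ₜ φ(t) ψ(wt)` in the definition of `P`, and
sum over `x` first. The inner sums are Kloosterman sums with arguments `(j+k)² - t` and
`a((j-k)² + t)`, which depend only on the product of their arguments unless both vanish. As `G² = q`,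
this gives (`gauss_sq_mul_Pkatz`)

`q P(j,k) = q (δ(j², k²) + δ(j², -k²)) + ∑ₜ φ(t) K((j² - k²)² - (t² - 4jkt))`.

Under `j ↦ ij` the two indicators are exchanged, and the argument of `K` becomes
`(j² - k²)² - (t - 2ijk)²`. Both sums over `t` agree for an arbitrary function `K`, because
`∑ φ(t)` over the roots of `t² + 2et = c` equals `∑ φ(s - ie)` over the square roots `s` of `c`,
for every `c` (`IsQuadChar.fiber`).
-/

open Finset

noncomputable section

variable {F : Type} [Field F]

/-! ### Quadratic and quartic characters -/

/-- `φ` is the quadratic character: `1` on nonzero squares and `-1` on nonsquares. -/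
structure IsQuadChar (φ : MulChar F ℂ) : Prop where
  sq : ∀ z : F, z ≠ 0 → φ (z ^ 2) = 1
  nonsq : ∀ z : F, ¬ IsSquare z → φ z = -1

namespace IsQuadChar

variable {φ : MulChar F ℂ}

lemma mul_self (hφ : IsQuadChar φ) {z : F} (hz : z ≠ 0) : φ z * φ z = 1 := by
  rw [← map_mul, ← pow_two, hφ.sq z hz]

/-- Two nonzero elements whose product is a square have the same quadratic character. -/
lemma eq_of_mul_eq_sq (hφ : IsQuadChar φ) {x y r : F} (hr : r ≠ 0) (h : x * y = r ^ 2) :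
    φ x = φ y := by
  have hy : y ≠ 0 := by
    rintro rfl
    exact pow_ne_zero 2 hr (by rw [← h, mul_zero])
  have e : φ x * φ y = 1 := by rw [← map_mul, h, hφ.sq r hr]
  have e' := hφ.mul_self hy
  linear_combination φ y * e - φ x * e'

lemma neg (hφ : IsQuadChar φ) {i : F} (hi : i ^ 2 = -1) (x : F) : φ (-x) = φ x := by
  have hi0 : i ≠ 0 := by rintro rfl; norm_num at hi
  rw [show -x = i ^ 2 * x by rw [hi]; ring, map_mul, hφ.sq i hi0, one_mul]

end IsQuadChar

variable [Fintype F] [DecidableEq F]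

lemma isQuadChar_of_sq_eq_one {φ : MulChar F ℂ} (h1 : φ ≠ 1) (h2 : φ ^ 2 = 1) :
    IsQuadChar φ := by
  have hsq : ∀ z : F, z ≠ 0 → φ z ^ 2 = 1 := by
    intro z hz
    have := congrArg (fun χ : MulChar F ℂ => χ z) h2
    simpa [MulChar.pow_apply' φ two_ne_zero,
      MulChar.one_apply (isUnit_iff_ne_zero.mpr hz)] using this
  have hsq' : ∀ z : F, z ≠ 0 → φ (z ^ 2) = 1 := fun z hz => by rw [map_pow, hsq z hz]
  refine ⟨hsq', fun z hz => ?_⟩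
  obtain ⟨w, hw⟩ := MulChar.ne_one_iff.mp h1
  have hw' : ¬ IsSquare (w : F) := by
    rintro ⟨r, hr⟩
    apply hw
    rw [hr, ← pow_two]
    apply hsq'
    rintro rfl
    exact w.ne_zero (by simp at hr)
  have hz0 : z ≠ 0 := by rintro rfl; exact hz (IsSquare.zero)
  have hwz : IsSquare ((w : F) * z) := by
    rw [← quadraticChar_one_iff_isSquare (mul_ne_zero w.ne_zero hz0), map_mul,
      quadraticChar_neg_one_iff_not_isSquare.mpr hw',
      quadraticChar_neg_one_iff_not_isSquare.mpr hz]
    norm_num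
  obtain ⟨r, hr⟩ := hwz
  have hr0 : r ≠ 0 := by
    rintro rfl
    exact mul_ne_zero w.ne_zero hz0 (by simpa using hr)
  have e : φ w * φ z = 1 := by rw [← map_mul, hr, ← pow_two, hsq' r hr0]
  rcases sq_eq_one_iff.mp (hsq w w.ne_zero) with h | h
  · exact absurd h hw
  · rw [h] at e
    linear_combination -e

/-- A character that is trivial on a primitive fourth root of unity is a fourth power. -/
lemma mulChar_eq_fourth_pow {i : F} (hi : i ^ 2 = -1) (h2 : (2 : F) ≠ 0)
    (χ : MulChar F ℂ) (hχ : χ i = 1) : ∃ ν : MulChar F ℂ, χ = ν ^ 4 := by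
  have hi0 : i ≠ 0 := by rintro rfl; norm_num at hi
  obtain ⟨g, hg⟩ := IsCyclic.exists_generator (α := Fˣ)
  set n := Fintype.card Fˣ with hn
  have hog : orderOf g = n := by
    rw [orderOf_eq_card_of_forall_mem_zpowers hg, Nat.card_eq_fintype_card]
  set I : Fˣ := Units.mk0 i hi0 with hI
  have hI2 : I ^ 2 ≠ 1 := by
    intro h
    have h' : i ^ 2 = 1 := by simpa [hI] using congrArg Units.val h
    apply h2
    linear_combination hi - h'
  have hoI : orderOf I = 2 ^ (1 + 1) := by
    apply orderOf_eq_prime_pow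
    · simpa using hI2
    · ext
      simp only [hI, Units.val_pow_eq_pow_val, Units.val_mk0, Units.val_one]
      linear_combination (i ^ 2 - 1) * hi
  have h4n : 4 ∣ n := by
    have := orderOf_dvd_card (x := I)
    rw [hoI] at this
    simpa using this
  obtain ⟨m, hm⟩ := h4n
  -- `g ^ m` is a fourth root of unity, hence a power of `i`.
  have hχgm : χ (g : F) ^ m = 1 := by
    rw [← map_pow]
    set z : F := (g : F) ^ m
    have hz : z ^ 4 = 1 := by
      have hgn : g ^ n = 1 := by rw [← hog, pow_orderOf_eq_one]
      rw [← pow_mul, mul_comm m 4, ← hm, ← Units.val_pow_eq_pow_val, hgn, Units.val_one]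
    have hfac : (z - 1) * (z + 1) * ((z - i) * (z + i)) = 0 := by
      linear_combination hz - (z ^ 2 - 1) * hi
    have hpow : ∃ l : ℕ, z = i ^ l := by
      rcases mul_eq_zero.mp hfac with h | h <;> rcases mul_eq_zero.mp h with h | h
      · exact ⟨0, by linear_combination h⟩
      · exact ⟨2, by linear_combination h - hi⟩
      · exact ⟨1, by linear_combination h⟩
      · exact ⟨3, by linear_combination h - i * hi⟩
    obtain ⟨l, hl⟩ := hpow
    rw [hl, map_pow, hχ, one_pow]
  obtain ⟨η, hη⟩ := IsAlgClosed.exists_pow_nat_eq (χ (g : F)) (n := 4) (by norm_num)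
  have hηn : η ^ n = 1 := by rw [hm, pow_mul, hη, hχgm]
  have hη0 : η ≠ 0 := by
    rintro rfl
    rw [zero_pow Fintype.card_ne_zero] at hηn
    exact zero_ne_one hηn
  have hroot : Units.mk0 η hη0 ∈ rootsOfUnity n ℂ := by
    rw [mem_rootsOfUnity]
    ext
    simpa using hηn
  refine ⟨MulChar.ofRootOfUnity hroot hg, ?_⟩
  rw [MulChar.eq_iff hg, MulChar.pow_apply_coe, MulChar.ofRootOfUnity_spec]
  simpa using hη.symm

/-! ### Sums of the quadratic character over fibres of quadratic polynomials -/

namespace IsQuadChar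

variable {φ : MulChar F ℂ}

/-- The combinatorial core: on every fibre, the quadratic character has the same sum over the roots
of `t² + 2et = c` as over the values `s - ie` with `s² = c`. If `c = y²` and `t` is a root, then
`(t + iy)² = (1 + i)² t (y + ie)`, so `φ(t) = φ(y + ie)`; if `c` or the discriminant
`e² + c` is a nonsquare, the two nonzero terms of the surviving side cancel. -/
lemma fiber (hφ : IsQuadChar φ) {i : F} (hi : i ^ 2 = -1) (h2 : (2 : F) ≠ 0) {e : F}
    (he : e ≠ 0) (c : F) :
    ∑ t : F, (if t ^ 2 + 2 * e * t = c then φ t else 0) =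
      ∑ s : F, (if s ^ 2 = c then φ (s - i * e) else 0) := by
  have hi0 : i ≠ 0 := by rintro rfl; norm_num at hi
  have h1i : (1 + i) ≠ 0 := by
    intro h
    apply h2
    linear_combination hi + (1 - i) * h
  have pair : ∀ (p : F → Prop) [DecidablePred p] (f : F → ℂ) (x y : F), x ≠ y →
      (∀ t, p t ↔ t = x ∨ t = y) → ∑ t : F, (if p t then f t else 0) = f x + f y := by
    intro p _ f x y hxy hp
    rw [← Finset.sum_filter, ← Finset.sum_pair hxy]
    congr 1
    ext t
    simp [hp]
  by_cases hsc : IsSquare c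
  · obtain ⟨y, rfl⟩ := hsc
    by_cases hy : y = 0
    · subst hy
      rw [pair _ φ 0 (-2 * e) (by simp [h2, he]) (fun t => by
        constructor
        · intro h
          have : t * (t + 2 * e) = 0 := by linear_combination h
          rcases mul_eq_zero.mp this with h | h
          · exact Or.inl h
          · right; linear_combination h
        · rintro (rfl | rfl) <;> ring)]
      have : ∀ s : F, s ^ 2 = 0 * 0 ↔ s = 0 := by simp
      simp only [this, Finset.sum_ite_eq', Finset.mem_univ, if_true]
      rw [MulChar.map_zero, zero_add]
      apply hφ.eq_of_mul_eq_sq (r := (1 + i) * e) (mul_ne_zero h1i he)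
      linear_combination -e ^ 2 * hi
    · have hyy : y ≠ -y := by
        intro h
        exact mul_ne_zero h2 hy (by linear_combination h)
      rw [pair (fun s => s ^ 2 = y * y) (fun s => φ (s - i * e)) y (-y) hyy (fun s => by
        rw [← pow_two]; exact sq_eq_sq_iff_eq_or_eq_neg)]
      by_cases hsd : IsSquare (e ^ 2 + y ^ 2)
      · obtain ⟨r, hr⟩ := hsd
        have hroots : ∀ t : F, t ^ 2 + 2 * e * t = y * y ↔ t = -e + r ∨ t = -e - r := by
          intro t
          constructor
          · intro h
            have : (t - (-e + r)) * (t - (-e - r)) = 0 := by linear_combination h + hr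
            rcases mul_eq_zero.mp this with h | h
            · left; linear_combination h
            · right; linear_combination h
          · rintro (rfl | rfl) <;> linear_combination -hr
        by_cases hr0 : r = 0
        · subst hr0
          simp only [hroots, add_zero, sub_zero, or_self, Finset.sum_ite_eq', Finset.mem_univ,
            if_true]
          have hfac : (y - i * e) * (y + i * e) = 0 := by linear_combination hr - e ^ 2 * hi
          rcases mul_eq_zero.mp hfac with h | h
          · rw [h, MulChar.map_zero, zero_add]
            apply hφ.eq_of_mul_eq_sq (r := (1 + i) * e) (mul_ne_zero h1i he)
            linear_combination e * h - e ^ 2 * hi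
          · rw [show -y - i * e = 0 by linear_combination -h, MulChar.map_zero, add_zero]
            apply hφ.eq_of_mul_eq_sq (r := (1 + i) * e) (mul_ne_zero h1i he)
            linear_combination -e * h - e ^ 2 * hi
        · rw [pair _ φ _ _ (fun h => mul_ne_zero h2 hr0 (by linear_combination h)) hroots]
          have key : ∀ t y : F, y ≠ 0 → t ^ 2 + 2 * e * t = y ^ 2 → y + i * e ≠ 0 →
              φ t = φ (y + i * e) := by
            intro t y hy ht hne
            have ht0 : t ≠ 0 := by
              rintro rfl
              exact pow_ne_zero 2 hy (by linear_combination -ht)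
            have hq : (t + i * y) ^ 2 = (1 + i) ^ 2 * (t * (y + i * e)) := by
              linear_combination ht + (y ^ 2 - t * y - e * t * i - 2 * t * e)* hi
            have hne' : t + i * y ≠ 0 := by
              intro h0
              rw [h0] at hq
              exact mul_ne_zero (pow_ne_zero 2 h1i) (mul_ne_zero ht0 hne) (by rw [← hq]; ring)
            apply hφ.eq_of_mul_eq_sq (r := (t + i * y) / (1 + i)) (div_ne_zero hne' h1i)
            rw [div_pow, hq]
            field_simp
          have hr2 : (y + i * e) * (y - i * e) = r ^ 2 := by linear_combination hr - e ^ 2 * hi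
          have hp : y + i * e ≠ 0 := by
            intro h; rw [h, zero_mul] at hr2; exact pow_ne_zero 2 hr0 hr2.symm
          have hm : y - i * e ≠ 0 := by
            intro h; rw [h, mul_zero] at hr2; exact pow_ne_zero 2 hr0 hr2.symm
          have h3 : φ (y - i * e) = φ (y + i * e) :=
            (hφ.eq_of_mul_eq_sq hr0 hr2).symm
          have h4 : φ (-y - i * e) = φ (y + i * e) := by
            rw [← hφ.neg hi]; congr 1; ring
          rw [h3, h4, key (-e + r) y hy (by linear_combination -hr) hp,
            key (-e - r) y hy (by linear_combination -hr) hp]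
      · rw [Finset.sum_eq_zero]
        · have : φ (y - i * e) * φ (-y - i * e) = -1 := by
            rw [← map_mul, ← hφ.nonsq _ hsd, ← hφ.neg hi]
            congr 1
            linear_combination -e ^ 2 * hi
          have hm : y - i * e ≠ 0 := by
            intro h; rw [h, MulChar.map_zero] at this; norm_num at this
          linear_combination -φ (y - i * e) * this + φ (-y - i * e) * hφ.mul_self hm
        · intro t _
          rw [if_neg]
          intro h
          exact hsd ⟨t + e, by linear_combination -h⟩
  · rw [Finset.sum_eq_zero (s := univ) (f := fun s : F => if s ^ 2 = c then φ (s - i * e) else 0)]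
    -- The involution `t ↦ -2e - t` swaps the two roots, whose product is `-c`.
    · have hanti : ∀ t : F, (if t ^ 2 + 2 * e * t = c then φ t else 0) =
          -(if (-2 * e - t) ^ 2 + 2 * e * (-2 * e - t) = c then φ (-2 * e - t) else 0) := by
        intro t
        have : (-2 * e - t) ^ 2 + 2 * e * (-2 * e - t) = t ^ 2 + 2 * e * t := by ring
        rw [this]
        split_ifs with h
        · have hm : φ t * φ (-2 * e - t) = -1 := by
            rw [← map_mul, ← hφ.nonsq _ hsc, ← hφ.neg hi]
            congr 1
            linear_combination h
          have ht : t ≠ 0 := by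
            rintro rfl
            rw [MulChar.map_zero] at hm; norm_num at hm
          linear_combination φ t * hm - φ (-2 * e - t) * hφ.mul_self ht
        · simp
      have hsum : ∑ t : F, (if t ^ 2 + 2 * e * t = c then φ t else 0) =
          -∑ t : F, (if t ^ 2 + 2 * e * t = c then φ t else 0) := by
        conv_lhs => rw [Finset.sum_congr rfl (fun t _ => hanti t), Finset.sum_neg_distrib]
        exact congrArg Neg.neg (Equiv.sum_comp (Equiv.subLeft (-2 * e))
          (fun t => if t ^ 2 + 2 * e * t = c then φ t else 0))
      linear_combination hsum / 2
    · intro s _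
      rw [if_neg]
      intro h
      exact hsc ⟨s, by rw [← h, pow_two]⟩

/-- Grouping both sums by the argument of `L` reduces this to `IsQuadChar.fiber`. -/
lemma sum_comp_eq (hφ : IsQuadChar φ) {i : F} (hi : i ^ 2 = -1) (h2 : (2 : F) ≠ 0) {e : F}
    (he : e ≠ 0) (L : F → ℂ) :
    ∑ t : F, φ t * L (t ^ 2 + 2 * e * t) = ∑ t : F, φ t * L ((t + i * e) ^ 2) := by
  have hfib : ∀ (g f : F → F),
      ∑ t : F, φ (g t) * L (f t) = ∑ c : F, L c * ∑ t : F, (if f t = c then φ (g t) else 0) := by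
    intro g f
    simp_rw [Finset.mul_sum]
    rw [Finset.sum_comm]
    refine Finset.sum_congr rfl fun t _ => ?_
    simp [mul_comm]
  rw [← Equiv.sum_comp (Equiv.subRight (i * e)) (fun t => φ t * L ((t + i * e) ^ 2))]
  simp only [Equiv.subRight_apply, sub_add_cancel]
  rw [hfib (fun t => t), hfib (fun s => s - i * e) (fun s => s ^ 2)]
  exact Finset.sum_congr rfl fun c _ => by rw [← hφ.fiber hi h2 he c]

end IsQuadChar

/-! ### Kloosterman and Gauss sums -/

lemma sum_nonzero_reindex (f : F → ℂ) (g g' : F → F) (hg : ∀ x ≠ 0, g x ≠ 0)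
    (hg' : ∀ x ≠ 0, g' x ≠ 0) (h1 : ∀ x ≠ 0, g' (g x) = x) (h2 : ∀ x ≠ 0, g (g' x) = x) :
    ∑ x ∈ univ.filter (fun x : F => x ≠ 0), f (g x) =
      ∑ x ∈ univ.filter (fun x : F => x ≠ 0), f x := by
  refine Finset.sum_nbij' g g' ?_ ?_ ?_ ?_ ?_
  · intro x hx; simpa using hg x (by simpa using hx)
  · intro x hx; simpa using hg' x (by simpa using hx)
  · intro x hx; exact h1 x (by simpa using hx)
  · intro x hx; exact h2 x (by simpa using hx)
  · intro x _; rfl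

/-- The Kloosterman sum `∑ ψ(A x + a B / x)` over nonzero `x`. -/
def klo (ψ : AddChar F ℂ) (a A B : F) : ℂ :=
  ∑ x ∈ univ.filter (fun x : F => x ≠ 0), ψ (x * A + a / x * B)

/-- Away from `A = B = 0`, a Kloosterman sum depends only on the product `A B`. -/
lemma klo_eq {ψ : AddChar F ℂ} (hψ : ψ ≠ 1) {a : F} (ha : a ≠ 0) (A B : F) :
    klo ψ a A B = klo ψ a 1 (A * B) +
      if A = 0 ∧ B = 0 then (Fintype.card F : ℂ) else 0 := by
  by_cases hA : A = 0
  · subst hA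
    by_cases hB : B = 0
    · subst hB
      have h0 := AddChar.sum_eq_zero_of_ne_one hψ
      rw [← Finset.add_sum_erase _ _ (Finset.mem_univ (0 : F)), AddChar.map_zero_eq_one,
        ← Finset.filter_ne'] at h0
      have h1 := Finset.card_erase_of_mem (Finset.mem_univ (0 : F))
      have hc : (#(univ.filter (fun x : F => x ≠ 0)) : ℂ) = Fintype.card F - 1 := by
        rw [Finset.filter_ne', h1, Finset.card_univ, Nat.cast_sub Fintype.card_pos, Nat.cast_one]
      simp only [klo, mul_zero, add_zero, AddChar.map_zero_eq_one, mul_one, Finset.sum_const,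
        nsmul_eq_mul, and_self, if_true, hc]
      linear_combination -h0
    · simp only [hB, and_false, if_false, add_zero]
      simp only [klo, mul_zero, zero_mul, zero_add, add_zero, mul_one]
      have hab : a * B ≠ 0 := mul_ne_zero ha hB
      rw [← sum_nonzero_reindex (fun x => ψ x) (fun x => a * B / x) (fun x => a * B / x)
        (fun x hx => div_ne_zero hab hx) (fun x hx => div_ne_zero hab hx)
        (fun x hx => by field_simp) (fun x hx => by field_simp)]
      exact Finset.sum_congr rfl fun x _ => by rw [div_mul_eq_mul_div]
  · simp only [hA, false_and, if_false, add_zero]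
    simp only [klo, mul_one]
    rw [← sum_nonzero_reindex (fun x => ψ (x + a / x * (A * B))) (fun x => x * A) (fun x => x / A)
      (fun x hx => mul_ne_zero hx hA) (fun x hx => div_ne_zero hx hA)
      (fun x hx => by field_simp) (fun x hx => by field_simp)]
    refine Finset.sum_congr rfl fun x hx => ?_
    have hx : x ≠ 0 := by simpa using hx
    congr 2
    field_simp

/-- The Fourier expansion of the quadratic character, valid at `w = 0` as well. -/
lemma IsQuadChar.gauss_mul {φ : MulChar F ℂ} (hφ : IsQuadChar φ) (h1 : φ ≠ 1)
    (ψ : AddChar F ℂ) (w : F) :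
    gaussSum φ ψ * φ w = ∑ t : F, φ t * ψ (w * t) := by
  by_cases hw : w = 0
  · subst hw
    simp only [MulChar.map_zero, mul_zero, zero_mul, AddChar.map_zero_eq_one, mul_one,
      MulChar.sum_eq_zero_of_ne_one h1]
  · have h := gaussSum_mulShift φ ψ (Units.mk0 w hw)
    simp only [Units.val_mk0] at h
    rw [← h]
    simp only [gaussSum, AddChar.mulShift_apply]
    linear_combination (∑ t : F, φ t * ψ (w * t)) * hφ.mul_self hw

lemma IsQuadChar.gauss_sq {φ : MulChar F ℂ} (hφ : IsQuadChar φ) (h1 : φ ≠ 1) {i : F}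
    (hi : i ^ 2 = -1) {ψ : AddChar F ℂ} (hψ : ψ ≠ 1) :
    gaussSum φ ψ ^ 2 = Fintype.card F := by
  have hq : φ.IsQuadratic := by
    intro z
    by_cases hz : IsSquare z
    · obtain ⟨r, rfl⟩ := hz
      by_cases hr : r = 0
      · subst hr; left; rw [mul_zero, MulChar.map_zero]
      · right; left; rw [← pow_two, hφ.sq r hr]
    · right; right; exact hφ.nonsq z hz
  rw [gaussSum_sq h1 hq (AddChar.IsPrimitive.of_ne_one hψ), hφ.neg hi, map_one, one_mul]

/-! ### Invariance of `P(j,k)` -/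

/-- `P(j,k)` as a twisted sum of Kloosterman sums. The second indicator comes from the single `t`
for which both Kloosterman arguments `(j+k)² - t` and `(j-k)² + t` vanish; that `t` equals the
nonzero square `(j+k)²`. -/
lemma gauss_sq_mul_Pkatz {ψ : AddChar F ℂ} (hψ : ψ ≠ 1) {A₄ : MulChar F ℂ}
    (hφ : IsQuadChar (A₄ ^ 2)) (h1 : A₄ ^ 2 ≠ 1) {i : F} (hi : i ^ 2 = -1) (h2 : (2 : F) ≠ 0)
    {a : F} (ha : a ≠ 0) {j k : F} (hj : j ≠ 0) (hk : k ≠ 0) :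
    gaussSum (A₄ ^ 2) ψ ^ 2 * Pkatz ψ A₄ a j k =
      (Fintype.card F : ℂ) * ((if j ^ 2 = k ^ 2 then 1 else 0) +
        (if j ^ 2 = -k ^ 2 then 1 else 0)) +
      ∑ t : F, (A₄ ^ 2) t * klo ψ a 1 (((j + k) ^ 2 - t) * ((j - k) ^ 2 + t)) := by
  have hG := hφ.gauss_sq h1 hi hψ
  have hcard : (Fintype.card F : ℂ) ≠ 0 := Nat.cast_ne_zero.mpr Fintype.card_ne_zero
  have hG0 : gaussSum (A₄ ^ 2) ψ ≠ 0 := by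
    intro h
    rw [h] at hG
    exact hcard (by rw [← hG]; ring)
  have hneg : (A₄ ^ 2) (-1 : F) = 1 := by rw [hφ.neg hi, map_one]
  have hdelta : ((if j = k then 1 else 0) + (if j = -k then 1 else 0) : ℂ) =
      if j ^ 2 = k ^ 2 then 1 else 0 := by
    have hkk : k ≠ -k := fun h => mul_ne_zero h2 hk (by linear_combination h)
    simp only [sq_eq_sq_iff_eq_or_eq_neg]
    by_cases h : j = k
    · subst h; simp [hkk]
    · simp [h]
  have hsum : gaussSum (A₄ ^ 2) ψ * ∑ x ∈ univ.filter (fun x : F => x ≠ 0),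
        (A₄ ^ 2) (a / x - x) * ψ (x * (j + k) ^ 2 + (a / x) * (j - k) ^ 2) =
      ∑ t : F, (A₄ ^ 2) t * klo ψ a ((j + k) ^ 2 - t) ((j - k) ^ 2 + t) := by
    simp only [klo, Finset.mul_sum]
    rw [Finset.sum_comm]
    refine Finset.sum_congr rfl fun x _ => ?_
    rw [← mul_assoc, hφ.gauss_mul h1 ψ, Finset.sum_mul]
    refine Finset.sum_congr rfl fun t _ => ?_
    rw [mul_assoc, ← AddChar.map_add_eq_mul]
    refine congrArg (fun u => (A₄ ^ 2) t * ψ u) ?_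
    ring
  have hcorr : ∑ t : F, (A₄ ^ 2) t *
        (if (j + k) ^ 2 - t = 0 ∧ (j - k) ^ 2 + t = 0 then (Fintype.card F : ℂ) else 0) =
      (Fintype.card F : ℂ) * (if j ^ 2 = -k ^ 2 then 1 else 0) := by
    rw [Finset.sum_eq_single ((j + k) ^ 2)]
    · by_cases h : j ^ 2 = -k ^ 2
      · have hjk : j + k ≠ 0 := by
          intro h0
          have : 2 * j ^ 2 = 0 := by linear_combination h + (j - k) * h0
          exact mul_ne_zero h2 (pow_ne_zero 2 hj) this
        rw [hφ.sq _ hjk, if_pos ⟨sub_self _, by linear_combination 2 * h⟩, if_pos h]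
        ring
      · rw [if_neg, if_neg h]
        · ring
        · rintro ⟨-, h0⟩
          apply h
          have : 2 * (j ^ 2 + k ^ 2) = 0 := by linear_combination h0
          rcases mul_eq_zero.mp this with h' | h'
          · exact absurd h' h2
          · linear_combination h'
    · intro t _ ht
      rw [if_neg, mul_zero]
      rintro ⟨h0, -⟩
      exact ht (by linear_combination -h0)
    · intro h; exact absurd (Finset.mem_univ _) h
  simp_rw [klo_eq hψ ha ((j + k) ^ 2 - _) ((j - k) ^ 2 + _), mul_add ((A₄ ^ 2) _),
    Finset.sum_add_distrib] at hsum
  rw [hcorr] at hsum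
  rw [Pkatz, hneg, one_mul, hdelta, mul_add, pow_two, mul_assoc _ _ (_⁻¹ * _),
    mul_inv_cancel_left₀ hG0, hsum, ← pow_two, hG]
  ring

lemma Pkatz_comm {ψ : AddChar F ℂ} {A₄ : MulChar F ℂ} (hneg : (A₄ ^ 2) (-1 : F) = 1)
    (a j k : F) : Pkatz ψ A₄ a j k = Pkatz ψ A₄ a k j := by
  have e1 : (j = k) = (k = j) := propext eq_comm
  have e2 : (j = -k) = (k = -j) :=
    propext ⟨fun h => by rw [h, neg_neg], fun h => by rw [h, neg_neg]⟩
  simp only [Pkatz, hneg, e1, e2, add_comm j k, ← neg_sub k j, neg_sq]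

/-- Multiplying `j` by a primitive fourth root of unity does not change `P(j,k)`: the two indicators
are exchanged, and the sums over `t` agree by `IsQuadChar.sum_comp_eq` with `e = -2jk`. -/
lemma Pkatz_mul_left {ψ : AddChar F ℂ} (hψ : ψ ≠ 1) {A₄ : MulChar F ℂ}
    (hφ : IsQuadChar (A₄ ^ 2)) (h1 : A₄ ^ 2 ≠ 1) {i : F} (hi : i ^ 2 = -1) (h2 : (2 : F) ≠ 0)
    {a : F} (ha : a ≠ 0) {j k : F} (hj : j ≠ 0) (hk : k ≠ 0) :
    Pkatz ψ A₄ a (i * j) k = Pkatz ψ A₄ a j k := by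
  have hi0 : i ≠ 0 := by rintro rfl; norm_num at hi
  have hG2 : gaussSum (A₄ ^ 2) ψ ^ 2 ≠ 0 := by
    rw [hφ.gauss_sq h1 hi hψ]
    exact Nat.cast_ne_zero.mpr Fintype.card_ne_zero
  apply mul_left_cancel₀ hG2
  rw [gauss_sq_mul_Pkatz hψ hφ h1 hi h2 ha (mul_ne_zero hi0 hj) hk,
    gauss_sq_mul_Pkatz hψ hφ h1 hi h2 ha hj hk]
  have he : -(2 * j * k) ≠ 0 := neg_ne_zero.mpr (mul_ne_zero (mul_ne_zero h2 hj) hk)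
  have key := hφ.sum_comp_eq hi h2 he (fun c => klo ψ a 1 ((j ^ 2 - k ^ 2) ^ 2 - c))
  have hl : ∀ t : F, ((j + k) ^ 2 - t) * ((j - k) ^ 2 + t) =
      (j ^ 2 - k ^ 2) ^ 2 - (t ^ 2 + 2 * -(2 * j * k) * t) := fun t => by ring
  have hr : ∀ t : F, ((i * j + k) ^ 2 - t) * ((i * j - k) ^ 2 + t) =
      (j ^ 2 - k ^ 2) ^ 2 - (t + i * -(2 * j * k)) ^ 2 := fun t => by
    linear_combination (j ^ 4 * (i ^ 2 - 1) + 2 * j ^ 2 * k ^ 2) * hi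
  simp only [hl, hr, key]
  have e1 : ((i * j) ^ 2 = k ^ 2) = (j ^ 2 = -k ^ 2) := by
    rw [mul_pow, hi]
    exact propext ⟨fun h => by linear_combination -h, fun h => by linear_combination -h⟩
  have e2 : ((i * j) ^ 2 = -k ^ 2) = (j ^ 2 = k ^ 2) := by
    rw [mul_pow, hi]
    exact propext ⟨fun h => by linear_combination -h, fun h => by linear_combination -h⟩
  simp only [e1, e2]
  ring

end

/-- `T(χ₁,χ₂) = 0` when `χ₁` and `χ₂` are not both fourth powers. -/
theorem T2_eq_zero_of_not_both_fourth_powers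
    (F : Type) [Field F] [Fintype F] [DecidableEq F]
    (hq : Fintype.card F % 4 = 1)
    (ψ : AddChar F ℂ) (hψ : ψ ≠ 1)
    (A₄ : MulChar F ℂ) (hA₄ : orderOf A₄ = 4)
    (a : F) (ha : a ≠ 0)
    (χ₁ χ₂ : MulChar F ℂ)
    (h : ¬ ∃ ν₁ ν₂ : MulChar F ℂ, χ₁ = ν₁ ^ 4 ∧ χ₂ = ν₂ ^ 4) :
    Tmel2 ψ A₄ a χ₁ χ₂ = 0 := by
  have hodd : ringChar F ≠ 2 := by
    intro h2
    have := FiniteField.even_card_of_char_two h2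
    omega
  have h2 : (2 : F) ≠ 0 := Ring.two_ne_zero hodd
  obtain ⟨i, hi⟩ : ∃ i : F, i ^ 2 = -1 := by
    obtain ⟨i, hi⟩ := FiniteField.isSquare_neg_one_iff.mpr (show Fintype.card F % 4 ≠ 3 by omega)
    exact ⟨i, by rw [pow_two, ← hi]⟩
  have hi0 : i ≠ 0 := by rintro rfl; norm_num at hi
  have h1 : A₄ ^ 2 ≠ 1 := by
    intro h'
    have := orderOf_dvd_of_pow_eq_one h'
    rw [hA₄] at this
    norm_num at this
  have hsq : (A₄ ^ 2) ^ 2 = 1 := by rw [← pow_mul, ← pow_orderOf_eq_one A₄, hA₄]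
  have hφ := isQuadChar_of_sq_eq_one h1 hsq
  have hneg : (A₄ ^ 2) (-1 : F) = 1 := by rw [hφ.neg hi, map_one]
  have reindex : ∀ f : F → ℂ, ∑ x ∈ univ.filter (fun x : F => x ≠ 0), f (i * x) =
      ∑ x ∈ univ.filter (fun x : F => x ≠ 0), f x := fun f =>
    sum_nonzero_reindex f (fun x => i * x) (fun x => i⁻¹ * x) (fun x hx => mul_ne_zero hi0 hx)
      (fun x hx => mul_ne_zero (inv_ne_zero hi0) hx) (fun x _ => inv_mul_cancel_left₀ hi0 x)
      (fun x _ => mul_inv_cancel_left₀ hi0 x)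
  -- Replacing `j` by `i j`, and likewise `k` by `i k`, multiplies `T` by `χ₁ i`, respectively `χ₂ i`.
  have hT1 : Tmel2 ψ A₄ a χ₁ χ₂ = χ₁ i * Tmel2 ψ A₄ a χ₁ χ₂ := by
    conv_lhs => rw [Tmel2, ← reindex]
    rw [Tmel2, Finset.mul_sum]
    refine Finset.sum_congr rfl fun j hj => ?_
    rw [Finset.mul_sum]
    refine Finset.sum_congr rfl fun k hk => ?_
    rw [Pkatz_mul_left hψ hφ h1 hi h2 ha (by simpa using hj) (by simpa using hk), map_mul]
    ring
  have hT2 : Tmel2 ψ A₄ a χ₁ χ₂ = χ₂ i * Tmel2 ψ A₄ a χ₁ χ₂ := by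
    rw [Tmel2, Finset.mul_sum]
    refine Finset.sum_congr rfl fun j hj => ?_
    conv_lhs => rw [← reindex]
    rw [Finset.mul_sum]
    refine Finset.sum_congr rfl fun k hk => ?_
    rw [Pkatz_comm hneg, Pkatz_mul_left hψ hφ h1 hi h2 ha (by simpa using hk) (by simpa using hj),
      Pkatz_comm hneg, map_mul]
    ring
  by_contra hT
  have hc : ∀ χ : MulChar F ℂ, Tmel2 ψ A₄ a χ₁ χ₂ = χ i * Tmel2 ψ A₄ a χ₁ χ₂ → χ i = 1 :=
    fun χ hχ => mul_right_cancel₀ hT (by rw [one_mul, ← hχ])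
  obtain ⟨ν₁, hν₁⟩ := mulChar_eq_fourth_pow hi h2 χ₁ (hc χ₁ hT1)
  obtain ⟨ν₂, hν₂⟩ := mulChar_eq_fourth_pow hi h2 χ₂ (hc χ₂ hT2)
  exact h ⟨ν₁, ν₂, hν₁, hν₂⟩
end
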